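/- arXiv:2302.13901 — 3 statements merged into one kernel-verified Lean document; each statement's English description precedes it below -/
import Mathlib

section
/- Let 0 ≤ d < 4/5. Then ∫₀¹∫₀¹ x^{3-3d} y^{1-d} (1-xy)^{-d} · ₂F₁(1,d;2-d;x) · ₂F₁(1,d;2-d;y) dx dy = [Γ(1-d)/(2(4-5d))]·[Γ(1-d)/Γ(2-2d)]·₃F₂(2-2d,1,2d-1;3-2d,2-d;1) − [Γ(1-d)/(2(4-5d))]·(Γ(3-3d)/Γ(4-4d) − Γ(1-d)/Γ(2-2d))·₃F₂(2-2d,1,d;3-2d,2-d;1) − [Γ(1-d)/(2(4-5d))]·[Γ(3-3d)/Γ(4-4d)]·₄F₃(1,d,2-2d,3-3d;2-d,3-2d,4-4d;1). -/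
open Real MeasureTheory

/-- Pochhammer symbol `(a)_k = a (a+1) ⋯ (a+k-1)` for real `a`. -/
noncomputable def poch (a : ℝ) (k : ℕ) : ℝ := (ascPochhammer ℝ k).eval a

/-- Gaussian hypergeometric function `₂F₁(a,b;c;z)`. -/
noncomputable def hyp2F1 (a b c z : ℝ) : ℝ :=
  ∑' k : ℕ, (poch a k * poch b k) / poch c k * z ^ k / (Nat.factorial k)

/-- Generalized hypergeometric function `₃F₂(a₁,a₂,a₃;b₁,b₂;z)`. -/
noncomputable def hyp3F2 (a₁ a₂ a₃ b₁ b₂ z : ℝ) : ℝ :=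
  ∑' k : ℕ, (poch a₁ k * poch a₂ k * poch a₃ k) / (poch b₁ k * poch b₂ k) * z ^ k /
    (Nat.factorial k)

/-- Generalized hypergeometric function `₄F₃(a₁,a₂,a₃,a₄;b₁,b₂,b₃;z)`. -/
noncomputable def hyp4F3 (a₁ a₂ a₃ a₄ b₁ b₂ b₃ z : ℝ) : ℝ :=
  ∑' k : ℕ, (poch a₁ k * poch a₂ k * poch a₃ k * poch a₄ k) /
    (poch b₁ k * poch b₂ k * poch b₃ k) * z ^ k / (Nat.factorial k)

/-!
Expanding `(1 - x y)^(-d)` turns the double integral into `∑ₙ Tₙ`, where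
`Tₙ = innerCoeff d n * hypMoment d (2 - d) (n + 4 - 3d)` is a product of two moments of
`₂F₁(1,d;2-d;·)`. Such moments satisfy the first-order recurrence of `hypMoment_add_one`, so `Tₙ`
satisfies one as well, and summing it telescopically evaluates `(4 - 5d) ∑ₙ Tₙ` through two simpler
series. One of them is a double series that partial fractions exchange for the `₄F₃`. The other,
`∑ₙ innerCoeff d n / (n + c)`, is a triple Euler integral over one of the two pieces into which
`p = x` cuts the region `0 < x, s < 1`, `x s < p < 1`; the integral over the other piece factors,
and integrating out `p` first over the whole region gives the `₃F₂` with parameter `2d - 1`.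
-/

open Filter Topology Set
open ProbabilityTheory (beta beta_pos lintegral_betaPDF lintegral_betaPDF_eq_one)

/-- The coefficient `(p)ₖ / (q)ₖ` of `zᵏ` in `₂F₁(1,p;q;z)`. -/
noncomputable def pochRatio (p q : ℝ) (k : ℕ) : ℝ := poch p k / poch q k

/-- The moment `∫₀¹ x^(c-1) ₂F₁(1,p;q;x) dx`, encoded by its expansion `∑ₖ (p)ₖ / (q)ₖ / (k + c)`
(junk value `0` when the series diverges). -/
noncomputable def hypMoment (p q c : ℝ) : ℝ := ∑' k : ℕ, pochRatio p q k / (k + c)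

section Pochhammer

variable {p q c : ℝ}

lemma poch_zero (a : ℝ) : poch a 0 = 1 := by simp [poch]

lemma poch_succ (a : ℝ) (k : ℕ) : poch a (k + 1) = poch a k * (k + a) := by
  rw [poch, ascPochhammer_succ_eval, poch, add_comm]

lemma poch_pos (hc : 0 < c) (k : ℕ) : 0 < poch c k := ascPochhammer_pos k c hc

lemma poch_one (k : ℕ) : poch 1 k = k.factorial := by simp [poch]

lemma poch_mul_add_eq (c : ℝ) (k : ℕ) : poch c k * (k + c) = c * poch (c + 1) k := by
  induction k with
  | zero => simp [poch_zero]
  | succ k ih => rw [poch_succ, poch_succ, ih]; push_cast; ring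

lemma Gamma_nat_add (hc : 0 < c) (k : ℕ) : Gamma (k + c) = poch c k * Gamma c := by
  induction k with
  | zero => simp [poch_zero]
  | succ k ih =>
    rw [Nat.cast_succ, add_right_comm, Gamma_add_one (by positivity), ih, poch_succ]; ring

lemma pochRatio_zero (p q : ℝ) : pochRatio p q 0 = 1 := by simp [pochRatio, poch_zero]

lemma pochRatio_succ (p q : ℝ) (k : ℕ) :
    pochRatio p q (k + 1) = pochRatio p q k * ((k + p) / (k + q)) := by
  rw [pochRatio, poch_succ, poch_succ, mul_div_mul_comm, pochRatio]

lemma pochRatio_succ_mul (hq : 0 < q) (k : ℕ) :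
    pochRatio p q (k + 1) * (k + q) = pochRatio p q k * (k + p) := by
  rw [pochRatio_succ]; field_simp

lemma pochRatio_nonneg (hp : 0 ≤ p) (hq : 0 < q) (k : ℕ) : 0 ≤ pochRatio p q k := by
  induction k with
  | zero => simp [pochRatio_zero]
  | succ k ih => rw [pochRatio_succ]; positivity

lemma abs_pochRatio_le (hq : 0 < q) (k : ℕ) : |pochRatio p q k| ≤ pochRatio |p| q k := by
  induction k with
  | zero => simp [pochRatio_zero]
  | succ k ih =>
    have h : |(k + p) / (k + q)| ≤ (k + |p|) / (k + q) := by
      rw [abs_div, abs_of_pos (by positivity : 0 < k + q)]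
      gcongr
      simpa using abs_add_le (k : ℝ) p
    rw [pochRatio_succ, pochRatio_succ, abs_mul]
    exact mul_le_mul ih h (abs_nonneg _) ((abs_nonneg _).trans ih)

lemma pochRatio_sub_succ (hq : 0 < q) (k : ℕ) :
    pochRatio p q k - pochRatio p q (k + 1) = (q - p) * (pochRatio p q k / (k + q)) := by
  rw [pochRatio_succ]; field_simp; ring

lemma pochRatio_self_add_one (hc : 0 < c) (k : ℕ) : pochRatio c (c + 1) k = c / (k + c) := by
  have := poch_pos (by positivity : 0 < c + 1) k
  rw [pochRatio, div_eq_div_iff (by positivity) (by positivity), poch_mul_add_eq]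

end Pochhammer

section Series

lemma summable_div_natCast_add {a : ℕ → ℝ} {c c' : ℝ} (hc : 0 < c) (hc' : 0 < c')
    (h : Summable fun k : ℕ => a k / (k + c)) : Summable fun k : ℕ => a k / (k + c') := by
  refine .of_norm_bounded (h.norm.mul_left (1 + c / c')) fun k => ?_
  have hcc' : k + c ≤ (1 + c / c') * (k + c') := by
    have : (1 + c / c') * (k + c') = k + c' + c / c' * k + c := by field_simp; ring
    have : 0 ≤ c / c' * k := by positivity
    linarith
  rw [norm_div, norm_div, norm_of_nonneg (by positivity : 0 ≤ k + c),
    norm_of_nonneg (by positivity : 0 ≤ k + c'), ← mul_div_assoc,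
    div_le_div_iff₀ (by positivity) (by positivity), mul_right_comm, mul_comm ‖a k‖]
  gcongr

lemma eq_zero_of_summable_of_tendsto {T : ℕ → ℝ} {a L : ℝ} (hT : Summable T)
    (hL : Tendsto (fun n : ℕ => (n + a) * T n) atTop (𝓝 L)) : L = 0 := by
  by_contra hne
  have hbig : (fun n : ℕ => 1 / |n + a| ^ (1 : ℝ)) =O[atTop] T := by
    refine .congr' (((hL.inv₀ hne).isBigO_one ℝ).norm_left.mul
      (Asymptotics.isBigO_refl T _).norm_left) ?_ (.of_forall fun n => one_mul _)
    filter_upwards [hL.eventually_ne hne] with n hn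
    have := right_ne_zero_of_mul hn
    rw [rpow_one, norm_inv, norm_mul, norm_eq_abs]
    field_simp
  exact (lt_irrefl (1 : ℝ)) ((summable_one_div_nat_add_rpow a 1).1 (summable_of_isBigO_nat hT hbig))

lemma hasSum_sub_succ {v : ℕ → ℝ} (hv : Tendsto v atTop (𝓝 0))
    (hs : Summable fun k => v k - v (k + 1)) : HasSum (fun k => v k - v (k + 1)) (v 0) := by
  refine hs.hasSum_iff_tendsto_nat.2 ?_
  simp only [Finset.sum_range_sub']
  simpa using hv.const_sub (v 0)

/-- With `V n = (n + a) T n` the recurrence reads `F (n + 1) = V (n + 1) - V n + (a - b) T n`. -/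
lemma hasSum_of_recurrence {T F : ℕ → ℝ} {a b G : ℝ} (ha : 0 < a) (hab : b < a)
    (hT : ∀ n, 0 ≤ T n) (h0 : a * T 0 = F 0)
    (hrec : ∀ n : ℕ, (n + 1 + a) * T (n + 1) = F (n + 1) + (n + b) * T n) (hF : HasSum F G) :
    HasSum T (G / (a - b)) := by
  have hpartial : ∀ N : ℕ, ∑ n ∈ Finset.range (N + 1), F n =
      (N + a) * T N + (a - b) * ∑ n ∈ Finset.range N, T n := by
    intro N
    induction N with
    | zero => simp [h0]
    | succ N ih =>
      rw [Finset.sum_range_succ, ih, Finset.sum_range_succ _ N]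
      push_cast
      linear_combination -hrec N
  have hFlim := hF.tendsto_sum_nat.comp (tendsto_add_atTop_nat 1)
  have hsum : Summable T := by
    obtain ⟨C, hC⟩ := hFlim.bddAbove_range
    refine summable_of_sum_range_le (c := C / (a - b)) hT fun N => ?_
    rw [le_div_iff₀' (sub_pos.2 hab)]
    have := (hpartial N).symm.trans_le (hC ⟨N, rfl⟩)
    have : 0 ≤ (N + a) * T N := mul_nonneg (by positivity) (hT N)
    linarith
  have hV : Tendsto (fun N : ℕ => (N + a) * T N) atTop (𝓝 (G - (a - b) * ∑' n, T n)) :=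
    (hFlim.sub (hsum.hasSum.tendsto_sum_nat.const_mul (a - b))).congr fun N => by
      simp [hpartial]
  have hG := eq_zero_of_summable_of_tendsto hsum hV
  rw [sub_eq_zero.1 hG, mul_div_cancel_left₀ _ (sub_pos.2 hab).ne']
  exact hsum.hasSum

end Series

section HypMoment

variable {p q c : ℝ}

lemma summable_pochRatio_div (hpq : |p| < q) (hc : 0 < c) :
    Summable fun k : ℕ => pochRatio p q k / (k + c) := by
  have hq : 0 < q := (abs_nonneg p).trans_lt hpq
  suffices Summable fun k : ℕ => pochRatio |p| q k / (k + c) by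
    refine this.of_norm_bounded fun k => ?_
    rw [norm_div, norm_of_nonneg (by positivity : 0 ≤ k + c)]
    gcongr
    exact abs_pochRatio_le hq k
  refine summable_div_natCast_add hq hc (hasSum_of_recurrence (b := |p|)
    (F := fun k => if k = 0 then 1 else 0) hq hpq (fun k => ?_) ?_ (fun k => ?_)
    (hasSum_ite_eq 0 1)).summable
  · have := pochRatio_nonneg (abs_nonneg p) hq k
    positivity
  · simp [pochRatio_zero, hq.ne']
  · rw [pochRatio_succ]
    push_cast
    field_simp
    simp

lemma tendsto_pochRatio (hpq : |p| < q) : Tendsto (pochRatio p q) atTop (𝓝 0) := by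
  have hq : 0 < q := (abs_nonneg p).trans_lt hpq
  have hsum := summable_pochRatio_div hpq hq
  have hlim : Tendsto (pochRatio p q) atTop (𝓝 (1 - (q - p) * hypMoment p q q)) :=
    ((hsum.hasSum.tendsto_sum_nat.const_mul (q - p)).const_sub 1).congr fun n => by
      rw [Finset.mul_sum, Finset.sum_congr rfl fun i _ => (pochRatio_sub_succ hq i).symm,
        Finset.sum_range_sub', pochRatio_zero, sub_sub_cancel]
  rwa [eq_zero_of_summable_of_tendsto hsum (hlim.congr fun n => by field_simp)] at hlim

lemma hypMoment_add_one (hpq : |p| < q) (hc : 0 < c) :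
    (c + 1 - p) * hypMoment p q (c + 1) = (c + 1 - q) * hypMoment p q c + (q - 1) / c := by
  have hq : 0 < q := (abs_nonneg p).trans_lt hpq
  have hM := summable_pochRatio_div hpq hc
  have hM1 := (summable_pochRatio_div hpq (by positivity : 0 < c + 1)).hasSum
  have htail : HasSum (fun k : ℕ => pochRatio p q (k + 1) / (k + (c + 1)))
      (hypMoment p q c - 1 / c) := by
    have := (hasSum_nat_add_iff' 1).2 hM.hasSum
    simpa [pochRatio_zero, add_assoc, add_comm (1 : ℝ), hypMoment] using this
  have htel := (hM1.mul_left (c + 1 - p)).sub (htail.mul_left (c + 1 - q))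
  have hterm : ∀ k : ℕ, (c + 1 - p) * (pochRatio p q k / (k + (c + 1)))
      - (c + 1 - q) * (pochRatio p q (k + 1) / (k + (c + 1)))
      = pochRatio p q k - pochRatio p q (k + 1) := fun k => by
    rw [pochRatio_succ]; field_simp; ring
  simp only [hterm] at htel
  have hval := htel.unique (hasSum_sub_succ (tendsto_pochRatio hpq) htel.summable)
  rw [pochRatio_zero, ← hypMoment] at hval
  have : c * (1 / c) = 1 := by field_simp
  linear_combination hval - this

end HypMoment

section TermwiseIntegration

lemma hasSum_integral_of_hasSum {α : Type*} [MeasurableSpace α] {μ : Measure α} {F : ℕ → α → ℝ}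
    {f : α → ℝ} (hF : ∀ n, Integrable (F n) μ) (hsum : Summable fun n => ∫ a, ‖F n a‖ ∂μ)
    (hf : ∀ᵐ a ∂μ, HasSum (F · a) (f a)) :
    Integrable f μ ∧ HasSum (fun n => ∫ a, F n a ∂μ) (∫ a, f a ∂μ) := by
  have hlint : ∀ n, ∫⁻ a, ‖F n a‖ₑ ∂μ = ENNReal.ofReal (∫ a, ‖F n a‖ ∂μ) := fun n =>
    (ofReal_integral_norm_eq_lintegral_enorm (hF n)).symm
  refine ⟨⟨?_, ?_⟩, ?_⟩
  · refine aestronglyMeasurable_of_tendsto_ae atTop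
      (f := fun N a => ∑ n ∈ Finset.range N, F n a)
      (fun N => Finset.aestronglyMeasurable_fun_sum _ fun n _ => (hF n).1) ?_
    filter_upwards [hf] with a ha using ha.tendsto_sum_nat
  · calc ∫⁻ a, ‖f a‖ₑ ∂μ ≤ ∫⁻ a, ∑' n, ‖F n a‖ₑ ∂μ := by
          refine lintegral_mono_ae ?_
          filter_upwards [hf] with a ha using ha.tsum_eq ▸ enorm_tsum_le_tsum_enorm
      _ = ∑' n, ENNReal.ofReal (∫ a, ‖F n a‖ ∂μ) := by
          rw [lintegral_tsum fun n => (hF n).1.enorm]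
          simp only [hlint]
      _ < ⊤ := hsum.tsum_ofReal_lt_top
  · rw [integral_congr_ae (by filter_upwards [hf] with a ha using ha.tsum_eq.symm)]
    exact hasSum_integral_of_summable_integral_norm hF hsum

lemma hasSum_integral_powerSeries_mul {a : ℕ → ℝ} {f g : ℝ → ℝ}
    (hg : ∀ x ∈ Ioo (0 : ℝ) 1, 0 ≤ g x)
    (hint : ∀ n : ℕ, IntegrableOn (fun x => x ^ n * g x) (Ioo 0 1))
    (hsum : Summable fun n => a n * ∫ x in Ioo (0 : ℝ) 1, x ^ n * g x)
    (hf : ∀ x ∈ Ioo (0 : ℝ) 1, HasSum (fun n => a n * x ^ n) (f x)) :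
    IntegrableOn (fun x => f x * g x) (Ioo 0 1) ∧
      HasSum (fun n => a n * ∫ x in Ioo (0 : ℝ) 1, x ^ n * g x)
        (∫ x in Ioo (0 : ℝ) 1, f x * g x) := by
  have hnorm : ∀ n, ∫ x in Ioo (0 : ℝ) 1, ‖a n * (x ^ n * g x)‖ =
      |a n * ∫ x in Ioo (0 : ℝ) 1, x ^ n * g x| := fun n => by
    rw [abs_mul, abs_of_nonneg (setIntegral_nonneg measurableSet_Ioo fun x hx =>
      mul_nonneg (pow_nonneg hx.1.le n) (hg x hx)), ← integral_const_mul]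
    refine setIntegral_congr_fun measurableSet_Ioo fun x hx => ?_
    simp only [norm_mul, norm_eq_abs, abs_of_nonneg (hg x hx), abs_of_nonneg (pow_nonneg hx.1.le n)]
  have h := hasSum_integral_of_hasSum (μ := volume.restrict (Ioo 0 1))
    (fun n => (hint n).const_mul (a n)) (by simpa only [hnorm] using hsum.abs)
    (ae_restrict_of_forall_mem measurableSet_Ioo fun x hx => by
      simpa only [mul_assoc] using (hf x hx).mul_right (g x))
  exact ⟨h.1, by simpa only [integral_const_mul] using h.2⟩

lemma integrableOn_pow_mul_rpow {c : ℝ} (hc : 0 < c) (n : ℕ) :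
    IntegrableOn (fun x : ℝ => x ^ n * x ^ (c - 1)) (Ioo 0 1) ∧
      ∫ x in Ioo (0 : ℝ) 1, x ^ n * x ^ (c - 1) = 1 / (n + c) := by
  have : (0 : ℝ) ≤ n := n.cast_nonneg
  have hpow : EqOn (fun x : ℝ => x ^ (n + (c - 1))) (fun x => x ^ n * x ^ (c - 1)) (Ioo 0 1) :=
    fun x hx => by simp only [rpow_add hx.1, rpow_natCast]
  constructor
  · refine IntegrableOn.congr_fun ?_ hpow measurableSet_Ioo
    rw [intervalIntegral.integrableOn_Ioo_rpow_iff one_pos]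
    linarith
  · rw [← setIntegral_congr_fun measurableSet_Ioo hpow, ← integral_Ioc_eq_integral_Ioo,
      ← intervalIntegral.integral_of_le zero_le_one, integral_rpow (.inl (by linarith)),
      one_rpow, zero_rpow (by linarith), sub_zero, add_assoc, sub_add_cancel]

lemma integral_powerSeries_mul_rpow {a : ℕ → ℝ} {f : ℝ → ℝ} {c : ℝ} (hc : 0 < c)
    (hsum : Summable fun n : ℕ => a n / (n + c))
    (hf : ∀ x ∈ Ioo (0 : ℝ) 1, HasSum (fun n => a n * x ^ n) (f x)) :
    IntegrableOn (fun x => f x * x ^ (c - 1)) (Ioo 0 1) ∧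
      ∫ x in Ioo (0 : ℝ) 1, f x * x ^ (c - 1) = ∑' n : ℕ, a n / (n + c) := by
  have hmoment : ∀ n : ℕ, a n * ∫ x in Ioo (0 : ℝ) 1, x ^ n * x ^ (c - 1) = a n / (n + c) :=
    fun n => by rw [(integrableOn_pow_mul_rpow hc n).2, mul_one_div]
  have h := hasSum_integral_powerSeries_mul (fun x hx => rpow_nonneg hx.1.le (c - 1))
    (fun n => (integrableOn_pow_mul_rpow hc n).1) (by simpa only [hmoment] using hsum) hf
  exact ⟨h.1, by simpa only [hmoment] using h.2.tsum_eq.symm⟩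

lemma lintegral_ofReal_eq_of_integral_eq {α : Type*} [MeasurableSpace α] {μ : Measure α} {f : α → ℝ}
    {v : ℝ} (hf : Integrable f μ ∧ ∫ a, f a ∂μ = v) (hf0 : 0 ≤ᵐ[μ] f) :
    ∫⁻ a, ENNReal.ofReal (f a) ∂μ = ENNReal.ofReal v := by
  rw [← ofReal_integral_eq_lintegral_ofReal hf.1 hf0, hf.2]

end TermwiseIntegration

section EulerIntegral

variable {p q c x : ℝ}

lemma abs_lt_one_of_mem_Ioo (hx : x ∈ Ioo (0 : ℝ) 1) : |x| < 1 := by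
  rw [abs_of_pos hx.1]; exact hx.2

lemma hasSum_one_sub_rpow (p : ℝ) (hx : |x| < 1) :
    HasSum (fun n => pochRatio p 1 n * x ^ n) ((1 - x) ^ (-p)) := by
  have h := (one_div_one_sub_rpow_hasFPowerSeriesOnBall_zero p).hasSum (y := x) (by
    simpa [enorm_eq_nnnorm, ← NNReal.coe_lt_coe] using hx)
  rw [rpow_neg (by linarith [le_abs_self x]), ← one_div]
  simp only [zero_add] at h
  refine h.congr_fun fun n => ?_
  have hpoch : poch p n = n.factorial * Ring.multichoose p n := by
    rw [poch, ← Polynomial.ascPochhammer_smeval_eq_eval,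
      ← Ring.factorial_nsmul_multichoose_eq_ascPochhammer, nsmul_eq_mul]
  rw [pochRatio, poch_one, hpoch, mul_div_cancel_left₀ _ (by positivity)]
  simp [FormalMultilinearSeries.ofScalars, Ring.multichoose_eq, mul_comm]

lemma integral_beta {α β : ℝ} (hα : 0 < α) (hβ : 0 < β) :
    IntegrableOn (fun x : ℝ => x ^ (α - 1) * (1 - x) ^ (β - 1)) (Ioo 0 1) ∧
      ∫ x in Ioo (0 : ℝ) 1, x ^ (α - 1) * (1 - x) ^ (β - 1) = beta α β := by
  have hB := beta_pos hα hβ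
  have hpos : 0 ≤ᵐ[volume.restrict (Ioo 0 1)]
      fun x => 1 / beta α β * x ^ (α - 1) * (1 - x) ^ (β - 1) :=
    ae_restrict_of_forall_mem measurableSet_Ioo fun x hx => by
      have := hx.1
      have := sub_pos.2 hx.2
      positivity
  have hone := lintegral_betaPDF.symm.trans (lintegral_betaPDF_eq_one hα hβ)
  have hint := (lintegral_ofReal_ne_top_iff_integrable (by fun_prop) hpos).1
    (hone.trans_ne ENNReal.one_ne_top)
  have hval := (integral_eq_lintegral_of_nonneg_ae hpos hint.1).trans
    (congrArg ENNReal.toReal hone)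
  simp only [mul_assoc, integral_const_mul, one_div, ENNReal.toReal_one] at hint hval
  exact ⟨(integrable_const_mul_iff (inv_ne_zero hB.ne').isUnit _).1 hint,
    (eq_of_inv_mul_eq_one hval).symm⟩

lemma summable_pochRatio_mul_pow (hpq : |p| < q) (hx : |x| < 1) :
    Summable fun n => pochRatio p q n * x ^ n := by
  refine summable_of_isBigO_nat (summable_geometric_of_abs_lt_one hx) ?_
  simpa using ((tendsto_pochRatio hpq).isBigO_one ℝ).mul
    (Asymptotics.isBigO_refl (fun n : ℕ => x ^ n) atTop)

lemma hasSum_hyp2F1 (hpq : |p| < q) (hx : |x| < 1) :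
    HasSum (fun n => pochRatio p q n * x ^ n) (hyp2F1 1 p q x) := by
  convert (summable_pochRatio_mul_pow hpq hx).hasSum using 1
  refine tsum_congr fun n => ?_
  rw [poch_one, pochRatio]
  field_simp

lemma integral_hyp2F1_mul_rpow (hpq : |p| < q) (hc : 0 < c) :
    IntegrableOn (fun x => hyp2F1 1 p q x * x ^ (c - 1)) (Ioo 0 1) ∧
      ∫ x in Ioo (0 : ℝ) 1, hyp2F1 1 p q x * x ^ (c - 1) = hypMoment p q c :=
  integral_powerSeries_mul_rpow hc (summable_pochRatio_div hpq hc) fun _ hx =>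
    hasSum_hyp2F1 hpq (abs_lt_one_of_mem_Ioo hx)

lemma hypMoment_one_right (hp : |p| < 1) (hc : 0 < c) :
    hypMoment p 1 c = beta c (1 - p) := by
  rw [hypMoment, ← (integral_powerSeries_mul_rpow hc (summable_pochRatio_div hp hc) fun x hx =>
    hasSum_one_sub_rpow p (abs_lt_one_of_mem_Ioo hx)).2,
    ← (integral_beta hc (by linarith [le_abs_self p])).2]
  simp only [sub_sub_cancel_left, mul_comm]

lemma integral_euler_hyp2F1 (hpq : |p| < q) (hq : 1 < q) (hx : |x| < 1) :
    IntegrableOn (fun s => (1 - x * s) ^ (-p) * (1 - s) ^ (q - 2)) (Ioo 0 1) ∧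
      ∫ s in Ioo (0 : ℝ) 1, (1 - x * s) ^ (-p) * (1 - s) ^ (q - 2) =
        hyp2F1 1 p q x / (q - 1) := by
  have hβ := fun n : ℕ => integral_beta (α := n + 1) (by positivity) (sub_pos.2 hq)
  simp only [add_sub_cancel_right, rpow_natCast, sub_sub, one_add_one_eq_two] at hβ
  have hterm : ∀ n : ℕ, pochRatio p 1 n * x ^ n * ∫ s in Ioo (0 : ℝ) 1, s ^ n * (1 - s) ^ (q - 2) =
      pochRatio p q n * x ^ n / (q - 1) := fun n => by
    have hq0 : 0 < q := by linarith
    have hq1 : 0 < q - 1 := sub_pos.2 hq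
    have hΓ : Gamma q = (q - 1) * Gamma (q - 1) := by
      simpa using Gamma_add_one hq1.ne'
    have := poch_pos hq0 n
    have := Gamma_pos_of_pos hq1
    rw [(hβ n).2, beta, add_add_sub_cancel, Gamma_nat_eq_factorial, Gamma_nat_add hq0, hΓ,
      pochRatio, pochRatio, poch_one]
    field_simp
  have h := hasSum_integral_powerSeries_mul (a := fun n => pochRatio p 1 n * x ^ n)
    (f := fun s => (1 - x * s) ^ (-p)) (fun s hs => rpow_nonneg (sub_nonneg.2 hs.2.le) (q - 2))
    (fun n => (hβ n).1) (by
      simpa only [hterm] using (summable_pochRatio_mul_pow hpq hx).div_const (q - 1))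
    fun s hs => by
      simpa only [mul_pow, mul_assoc] using hasSum_one_sub_rpow p (x := x * s) (by
        rw [abs_mul, abs_of_pos hs.1]; nlinarith [hs.1, hs.2])
  simp only [hterm] at h
  exact ⟨h.1, h.2.unique ((hasSum_hyp2F1 hpq hx).div_const _)⟩

end EulerIntegral

section Tonelli

open scoped ENNReal

lemma lintegral_Ioo_comp_mul_add {r : ℝ} (hr : 0 < r) (a l u : ℝ) (F : ℝ → ℝ≥0∞) :
    ∫⁻ p in Ioo (r * l + a) (r * u + a), F p =
      ∫⁻ t in Ioo l u, ENNReal.ofReal r * F (r * t + a) := by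
  rw [← image_affine_Ioo hr, lintegral_image_eq_lintegral_abs_deriv_mul (f' := fun _ => r)
    measurableSet_Ioo (fun t _ => ?_) fun s _ t _ hst => by simpa [hr.ne'] using hst, abs_of_pos hr]
  simpa using (((hasDerivAt_id t).const_mul r).add_const a).hasDerivWithinAt

lemma lintegral_Ioo_comp_mul {r : ℝ} (hr : 0 < r) (l u : ℝ) (F : ℝ → ℝ≥0∞) :
    ∫⁻ p in Ioo (r * l) (r * u), F p = ∫⁻ t in Ioo l u, ENNReal.ofReal r * F (r * t) := by
  simpa using lintegral_Ioo_comp_mul_add hr 0 l u F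

lemma lintegral_Ioo_add_Ioo {l m u : ℝ} (hlm : l < m) (hmu : m < u) (F : ℝ → ℝ≥0∞) :
    (∫⁻ p in Ioo l m, F p) + ∫⁻ p in Ioo m u, F p = ∫⁻ p in Ioo l u, F p := by
  rw [restrict_Ioo_eq_restrict_Ioc, ← Ioc_union_Ioo_eq_Ioo hlm.le hmu, lintegral_union
    measurableSet_Ioo (disjoint_left.2 fun p hp hp' => hp.2.not_gt hp'.1)]

lemma measurable_lintegral_Ioo {α : Type*} [MeasurableSpace α] {l u : α → ℝ} {F : α → ℝ → ℝ≥0∞}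
    (hl : Measurable l) (hu : Measurable u) (hF : Measurable (Function.uncurry F)) :
    Measurable fun z => ∫⁻ p in Ioo (l z) (u z), F z p := by
  simp only [← lintegral_indicator measurableSet_Ioo]
  exact (hF.indicator ((measurableSet_lt (hl.comp measurable_fst) measurable_snd).inter
    (measurableSet_lt measurable_snd (hu.comp measurable_fst)))).lintegral_prod_right'

lemma lintegral_triangle_swap {F : ℝ → ℝ → ℝ≥0∞} (hF : Measurable (Function.uncurry F)) :
    ∫⁻ x in Ioo (0 : ℝ) 1, ∫⁻ p in Ioo x 1, F x p =
      ∫⁻ p in Ioo (0 : ℝ) 1, ∫⁻ x in Ioo 0 p, F x p := by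
  have hmeas : Measurable (Function.uncurry fun x p => (Ioi x).indicator (F x) p) :=
    hF.indicator (measurableSet_lt measurable_fst measurable_snd)
  calc ∫⁻ x in Ioo (0 : ℝ) 1, ∫⁻ p in Ioo x 1, F x p
      = ∫⁻ x in Ioo (0 : ℝ) 1, ∫⁻ p in Ioo (0 : ℝ) 1, (Ioi x).indicator (F x) p := by
        refine setLIntegral_congr_fun measurableSet_Ioo fun x hx => ?_
        rw [setLIntegral_indicator measurableSet_Ioi, Ioi_inter_Ioo, max_eq_left hx.1.le]
    _ = ∫⁻ p in Ioo (0 : ℝ) 1, ∫⁻ x in Ioo (0 : ℝ) 1, (Iio p).indicator (F · p) x :=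
        lintegral_lintegral_swap hmeas.aemeasurable
    _ = ∫⁻ p in Ioo (0 : ℝ) 1, ∫⁻ x in Ioo 0 p, F x p := by
        refine setLIntegral_congr_fun measurableSet_Ioo fun p hp => ?_
        rw [setLIntegral_indicator measurableSet_Iio, Iio_inter_Ioo, min_eq_left hp.2.le]

lemma lintegral_beta_Ioo {α β w : ℝ} (hα : 0 < α) (hβ : 0 < β) (hw : w < 1) :
    ∫⁻ p in Ioo w 1, ENNReal.ofReal ((p - w) ^ (α - 1) * (1 - p) ^ (β - 1)) =
      ENNReal.ofReal (beta α β) * ENNReal.ofReal ((1 - w) ^ (α + β - 1)) := by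
  have hr : 0 < 1 - w := sub_pos.2 hw
  have hsub := lintegral_Ioo_comp_mul_add hr w 0 1
    fun p => ENNReal.ofReal ((p - w) ^ (α - 1) * (1 - p) ^ (β - 1))
  rw [mul_zero, zero_add, mul_one, sub_add_cancel] at hsub
  have hbeta := lintegral_ofReal_eq_of_integral_eq (integral_beta hα hβ)
    (ae_restrict_of_forall_mem measurableSet_Ioo fun t ht =>
      mul_nonneg (rpow_nonneg ht.1.le _) (rpow_nonneg (sub_pos.2 ht.2).le _))
  rw [hsub, ← hbeta, ← lintegral_mul_const _ (by fun_prop)]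
  refine setLIntegral_congr_fun measurableSet_Ioo fun t ht => ?_
  have ht1 := sub_pos.2 ht.2
  have hpow : (1 - w) ^ (α + β - 1) = (1 - w) * (1 - w) ^ (α - 1) * (1 - w) ^ (β - 1) := by
    rw [← rpow_one_add' hr.le (by simpa using hα.ne'), ← rpow_add hr]; ring_nf
  have hfactor : 1 - ((1 - w) * t + w) = (1 - w) * (1 - t) := by ring
  rw [← ENNReal.ofReal_mul hr.le, ← ENNReal.ofReal_mul (by have := ht.1; positivity), hpow,
    add_sub_cancel_right, hfactor, mul_rpow hr.le ht.1.le, mul_rpow hr.le ht1.le]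
  ring_nf

/-- The integrand of the triple Euler integral over `0 < x, s < 1`, `x s < p < 1` on which the
moment identity rests. -/
noncomputable def eulerKernel (a b e c x s p : ℝ) : ℝ≥0∞ :=
  ENNReal.ofReal (x ^ (c + e - 2) * (1 - s) ^ (-a) * (1 - p) ^ (-b) * (p - x * s) ^ (-e))

variable {a b e c : ℝ}

lemma lintegral_eulerKernel (hb : b < 1) (he : e < 1) :
    ∫⁻ x in Ioo (0 : ℝ) 1, ∫⁻ s in Ioo (0 : ℝ) 1, ∫⁻ p in Ioo (x * s) 1,
        eulerKernel a b e c x s p =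
      ENNReal.ofReal (beta (1 - e) (1 - b)) * ∫⁻ x in Ioo (0 : ℝ) 1, ∫⁻ s in Ioo (0 : ℝ) 1,
        ENNReal.ofReal (x ^ (c + e - 2) * (1 - s) ^ (-a) * (1 - x * s) ^ (1 - b - e)) := by
  simp only [← lintegral_const_mul' _ _ ENNReal.ofReal_ne_top]
  refine setLIntegral_congr_fun measurableSet_Ioo fun x hx =>
    setLIntegral_congr_fun measurableSet_Ioo fun s hs => ?_
  have hnn : 0 ≤ x ^ (c + e - 2) * (1 - s) ^ (-a) :=
    mul_nonneg (rpow_nonneg hx.1.le _) (rpow_nonneg (sub_pos.2 hs.2).le _)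
  have h := lintegral_beta_Ioo (sub_pos.2 he) (sub_pos.2 hb)
    (mul_lt_one_of_nonneg_of_lt_one_left hx.1.le hx.2 hs.2.le)
  rw [sub_sub_cancel_left, sub_sub_cancel_left, show 1 - e + (1 - b) - 1 = 1 - b - e by ring] at h
  rw [ENNReal.ofReal_mul hnn, mul_left_comm, ← h, ← lintegral_const_mul' _ _ ENNReal.ofReal_ne_top]
  refine lintegral_congr fun p => ?_
  rw [eulerKernel, ← ENNReal.ofReal_mul hnn]
  ring_nf

lemma lintegral_eulerKernel_above :
    ∫⁻ x in Ioo (0 : ℝ) 1, ∫⁻ s in Ioo (0 : ℝ) 1, ∫⁻ p in Ioo x 1, eulerKernel a b e c x s p =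
      (∫⁻ p in Ioo (0 : ℝ) 1, ENNReal.ofReal (p ^ (c - 1) * (1 - p) ^ (-b))) *
        ∫⁻ y in Ioo (0 : ℝ) 1, ∫⁻ s in Ioo (0 : ℝ) 1,
          ENNReal.ofReal (y ^ (c + e - 2) * (1 - s) ^ (-a) * (1 - y * s) ^ (-e)) := by
  have hmeas : Measurable fun z : (ℝ × ℝ) × ℝ => eulerKernel a b e c z.1.1 z.2 z.1.2 := by
    unfold eulerKernel; fun_prop
  have hswap : ∀ x : ℝ, ∫⁻ s in Ioo (0 : ℝ) 1, ∫⁻ p in Ioo x 1, eulerKernel a b e c x s p =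
      ∫⁻ p in Ioo x 1, ∫⁻ s in Ioo (0 : ℝ) 1, eulerKernel a b e c x s p := fun x =>
    lintegral_lintegral_swap (by unfold eulerKernel; fun_prop)
  simp only [hswap]
  rw [lintegral_triangle_swap hmeas.lintegral_prod_right, ← lintegral_mul_const _ (by fun_prop)]
  refine setLIntegral_congr_fun measurableSet_Ioo fun p hp => ?_
  have hscale := lintegral_Ioo_comp_mul hp.1 0 1
    fun x => ∫⁻ s in Ioo (0 : ℝ) 1, eulerKernel a b e c x s p
  rw [mul_zero, mul_one] at hscale
  simp only [hscale, ← lintegral_const_mul' _ _ ENNReal.ofReal_ne_top]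
  refine setLIntegral_congr_fun measurableSet_Ioo fun y hy =>
    setLIntegral_congr_fun measurableSet_Ioo fun s hs => ?_
  have hys : 0 < 1 - y * s := sub_pos.2 (mul_lt_one_of_nonneg_of_lt_one_left hy.1.le hy.2 hs.2.le)
  have hpow : p ^ (c - 1) = p * p ^ (c + e - 2) * p ^ (-e) := by
    nth_rw 2 [← rpow_one p]
    rw [← rpow_add hp.1, ← rpow_add hp.1]; ring_nf
  have hfactor : p - p * y * s = p * (1 - y * s) := by ring
  have hp1 := sub_pos.2 hp.2
  have hp0 := hp.1
  rw [eulerKernel, ← ENNReal.ofReal_mul hp.1.le, ← ENNReal.ofReal_mul (by positivity), hpow,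
    hfactor, mul_rpow hp.1.le hy.1.le, mul_rpow hp.1.le hys.le]
  ring_nf

lemma lintegral_eulerKernel_below :
    ∫⁻ x in Ioo (0 : ℝ) 1, ∫⁻ s in Ioo (0 : ℝ) 1, ∫⁻ p in Ioo (x * s) x,
        eulerKernel a b e c x s p =
      ∫⁻ x in Ioo (0 : ℝ) 1, ∫⁻ v in Ioo (0 : ℝ) 1, ∫⁻ σ in Ioo (0 : ℝ) 1, ENNReal.ofReal
        (x ^ (c - 1) * (1 - x * v) ^ (-b) * v ^ (1 - e) * (1 - v * σ) ^ (-a) * (1 - σ) ^ (-e)) := by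
  refine setLIntegral_congr_fun measurableSet_Ioo fun x hx => ?_
  have hscale : ∀ s, ∫⁻ p in Ioo (x * s) x, eulerKernel a b e c x s p =
      ∫⁻ v in Ioo s 1, ENNReal.ofReal x * eulerKernel a b e c x s (x * v) := fun s => by
    simpa using lintegral_Ioo_comp_mul hx.1 s 1 (eulerKernel a b e c x s)
  simp only [hscale]
  rw [lintegral_triangle_swap (by unfold eulerKernel Function.uncurry; fun_prop)]
  refine setLIntegral_congr_fun measurableSet_Ioo fun v hv => ?_
  have hscale := lintegral_Ioo_comp_mul hv.1 0 1
    fun s => ENNReal.ofReal x * eulerKernel a b e c x s (x * v)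
  rw [mul_zero, mul_one] at hscale
  rw [hscale]
  refine setLIntegral_congr_fun measurableSet_Ioo fun σ hσ => ?_
  have hpowx : x ^ (c - 1) = x * x ^ (c + e - 2) * x ^ (-e) := by
    nth_rw 2 [← rpow_one x]
    rw [← rpow_add hx.1, ← rpow_add hx.1]; ring_nf
  have hpowv : v ^ (1 - e) = v * v ^ (-e) := by
    nth_rw 2 [← rpow_one v]
    rw [← rpow_add hv.1]; ring_nf
  have hfactor : x * v - x * (v * σ) = x * (v * (1 - σ)) := by ring
  have hσ1 := sub_pos.2 hσ.2
  rw [eulerKernel, ← ENNReal.ofReal_mul hx.1.le, ← ENNReal.ofReal_mul hv.1.le, hpowx, hpowv,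
    hfactor, mul_rpow hx.1.le (mul_nonneg hv.1.le hσ1.le), mul_rpow hv.1.le hσ1.le]
  ring_nf

/-- Cutting the triple integral of `eulerKernel` along `p = x` and integrating in two orders. -/
lemma lintegral_euler_identity (hb : b < 1) (he : e < 1) :
    (∫⁻ x in Ioo (0 : ℝ) 1, ∫⁻ v in Ioo (0 : ℝ) 1, ∫⁻ σ in Ioo (0 : ℝ) 1, ENNReal.ofReal
        (x ^ (c - 1) * (1 - x * v) ^ (-b) * v ^ (1 - e) * (1 - v * σ) ^ (-a) * (1 - σ) ^ (-e))) +
      (∫⁻ p in Ioo (0 : ℝ) 1, ENNReal.ofReal (p ^ (c - 1) * (1 - p) ^ (-b))) *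
        ∫⁻ y in Ioo (0 : ℝ) 1, ∫⁻ s in Ioo (0 : ℝ) 1,
          ENNReal.ofReal (y ^ (c + e - 2) * (1 - s) ^ (-a) * (1 - y * s) ^ (-e)) =
      ENNReal.ofReal (beta (1 - e) (1 - b)) * ∫⁻ x in Ioo (0 : ℝ) 1, ∫⁻ s in Ioo (0 : ℝ) 1,
        ENNReal.ofReal (x ^ (c + e - 2) * (1 - s) ^ (-a) * (1 - x * s) ^ (1 - b - e)) := by
  have habove : Measurable fun z : ℝ × ℝ =>
      ∫⁻ p in Ioo z.1 1, eulerKernel a b e c z.1 z.2 p :=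
    measurable_lintegral_Ioo measurable_fst measurable_const
      (by unfold eulerKernel Function.uncurry; fun_prop)
  rw [← lintegral_eulerKernel hb he, ← lintegral_eulerKernel_above, ← lintegral_eulerKernel_below,
    ← lintegral_add_right _ habove.lintegral_prod_right]
  refine setLIntegral_congr_fun measurableSet_Ioo fun x hx => ?_
  refine (lintegral_add_right _ (habove.comp measurable_prodMk_left)).symm.trans ?_
  exact setLIntegral_congr_fun measurableSet_Ioo fun s hs =>
    lintegral_Ioo_add_Ioo (mul_lt_of_lt_one_right hx.1 hs.2) hx.2 _

end Tonelli

section MomentIdentity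

variable {p q a c d x : ℝ}

lemma one_sub_mul_pos {y : ℝ} (hx : |x| < 1) (hy : y ∈ Ioo (0 : ℝ) 1) : 0 < 1 - x * y := by
  have := le_abs_self x
  nlinarith [hy.1, hy.2]

lemma hyp2F1_nonneg (hpq : |p| < q) (hq : 1 < q) (hx : |x| < 1) : 0 ≤ hyp2F1 1 p q x := by
  have hint : 0 ≤ ∫ s in Ioo (0 : ℝ) 1, (1 - x * s) ^ (-p) * (1 - s) ^ (q - 2) :=
    setIntegral_nonneg measurableSet_Ioo fun s hs =>
      mul_nonneg (rpow_nonneg (one_sub_mul_pos hx hs).le _) (rpow_nonneg (sub_pos.2 hs.2).le _)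
  rw [(integral_euler_hyp2F1 hpq hq hx).2] at hint
  simpa [div_mul_cancel₀ _ (sub_pos.2 hq).ne'] using mul_nonneg hint (sub_pos.2 hq).le

lemma integral_pow_mul_hyp2F1 (hpq : |p| < q) (hc : 0 < c) (n : ℕ) :
    IntegrableOn (fun x => x ^ n * (hyp2F1 1 p q x * x ^ (c - 1))) (Ioo 0 1) ∧
      ∫ x in Ioo (0 : ℝ) 1, x ^ n * (hyp2F1 1 p q x * x ^ (c - 1)) = hypMoment p q (n + c) := by
  have hpow : EqOn (fun x => hyp2F1 1 p q x * x ^ (n + c - 1))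
      (fun x => x ^ n * (hyp2F1 1 p q x * x ^ (c - 1))) (Ioo 0 1) := fun x hx => by
    simp only [add_sub_assoc, rpow_add hx.1, rpow_natCast]
    ring
  have h := integral_hyp2F1_mul_rpow hpq (by positivity : 0 < n + c)
  exact ⟨h.1.congr_fun hpow measurableSet_Ioo,
    (setIntegral_congr_fun measurableSet_Ioo hpow).symm.trans h.2⟩

lemma hyp2F1_mul_rpow_nonneg (hpq : |p| < q) (hq : 1 < q) (hx : x ∈ Ioo (0 : ℝ) 1) :
    0 ≤ hyp2F1 1 p q x * x ^ (c - 1) :=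
  mul_nonneg (hyp2F1_nonneg hpq hq (abs_lt_one_of_mem_Ioo hx)) (rpow_nonneg hx.1.le _)

lemma hypMoment_nonneg (hpq : |p| < q) (hq : 1 < q) (hc : 0 < c) : 0 ≤ hypMoment p q c := by
  rw [← (integral_hyp2F1_mul_rpow hpq hc).2]
  exact setIntegral_nonneg measurableSet_Ioo fun x hx => hyp2F1_mul_rpow_nonneg hpq hq hx

lemma hypMoment_nat_add_le (hpq : |p| < q) (hq : 1 < q) (hc : 0 < c) (n : ℕ) :
    hypMoment p q (n + c) ≤ hypMoment p q c := by
  have hn := integral_pow_mul_hyp2F1 hpq hc n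
  have h0 := integral_hyp2F1_mul_rpow hpq hc
  rw [← hn.2, ← h0.2]
  exact setIntegral_mono_on hn.1 h0.1 measurableSet_Ioo fun x hx =>
    mul_le_of_le_one_left (hyp2F1_mul_rpow_nonneg hpq hq hx) (pow_le_one₀ hx.1.le hx.2.le)

lemma summable_mul_hypMoment {u : ℕ → ℝ} (hpq : |p| < q) (hq : 1 < q) (hc : 0 < c)
    (hu : Summable u) : Summable fun n : ℕ => u n * hypMoment p q (n + c) := by
  refine .of_norm_bounded (hu.norm.mul_right (hypMoment p q c)) fun n => ?_
  rw [norm_mul, norm_of_nonneg (hypMoment_nonneg hpq hq (by positivity))]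
  gcongr
  exact hypMoment_nat_add_le hpq hq hc n

/-- The coefficient of `xⁿ` in `∫₀¹ (1 - x y)^(-d) y^(1-d) ₂F₁(1,d;2-d;y) dy`, the inner integral
of the theorem. -/
noncomputable def innerCoeff (d : ℝ) (n : ℕ) : ℝ :=
  pochRatio d 1 n * hypMoment d (2 - d) (n + (2 - d))

lemma abs_lt_two_sub (hd : |d| < 1) : |d| < 2 - d := by linarith [le_abs_self d]

lemma one_lt_two_sub (hd : |d| < 1) : 1 < 2 - d := by linarith [le_abs_self d]

lemma hasSum_innerCoeff (hd : |d| < 1) (hx : x ∈ Ioo (0 : ℝ) 1) :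
    IntegrableOn (fun y => (1 - x * y) ^ (-d) * (hyp2F1 1 d (2 - d) y * y ^ (2 - d - 1)))
        (Ioo 0 1) ∧
      HasSum (fun n => innerCoeff d n * x ^ n)
        (∫ y in Ioo (0 : ℝ) 1, (1 - x * y) ^ (-d) * (hyp2F1 1 d (2 - d) y * y ^ (2 - d - 1))) := by
  have hpq := abs_lt_two_sub hd
  have hq := one_lt_two_sub hd
  have hM := integral_pow_mul_hyp2F1 hpq (zero_lt_one.trans hq)
  have h := hasSum_integral_powerSeries_mul (a := fun n => pochRatio d 1 n * x ^ n)
    (f := fun y => (1 - x * y) ^ (-d)) (fun y hy => hyp2F1_mul_rpow_nonneg hpq hq hy)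
    (fun n => (hM n).1) (by
      simpa only [(hM _).2] using summable_mul_hypMoment hpq hq (zero_lt_one.trans hq)
        (summable_pochRatio_mul_pow hd (abs_lt_one_of_mem_Ioo hx)))
    fun y hy => by
      simpa only [mul_pow, mul_assoc] using hasSum_one_sub_rpow d (x := x * y)
        (abs_lt_one_of_mem_Ioo ⟨mul_pos hx.1 hy.1,
          mul_lt_one_of_nonneg_of_lt_one_left hx.1.le hx.2 hy.2.le⟩)
  simp only [(hM _).2, mul_right_comm _ (x ^ _)] at h
  exact h

lemma summable_innerCoeff_div (hd : |d| < 1) (hc : 0 < c) :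
    Summable fun n : ℕ => innerCoeff d n / (n + c) :=
  (summable_mul_hypMoment (abs_lt_two_sub hd) (one_lt_two_sub hd)
    (zero_lt_one.trans (one_lt_two_sub hd)) (summable_pochRatio_div hd hc)).congr fun _ =>
      div_mul_eq_mul_div _ _ _

lemma lintegral_hyp2F1 (hp : |p| < 2 - a) (ha : a < 1) (hx : |x| < 1) :
    ∫⁻ s in Ioo (0 : ℝ) 1, ENNReal.ofReal ((1 - x * s) ^ (-p) * (1 - s) ^ (-a)) =
      ENNReal.ofReal (hyp2F1 1 p (2 - a) x / (1 - a)) := by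
  have h := lintegral_ofReal_eq_of_integral_eq (integral_euler_hyp2F1 hp (by linarith) hx)
    (ae_restrict_of_forall_mem measurableSet_Ioo fun s hs =>
      mul_nonneg (rpow_nonneg (one_sub_mul_pos hx hs).le _) (rpow_nonneg (sub_pos.2 hs.2).le _))
  simpa only [sub_sub_cancel_left, show 2 - a - 1 = 1 - a by ring] using h

lemma lintegral_hypMoment (hp : |p| < 2 - a) (ha : a < 1) (hc : 0 < c) :
    ∫⁻ x in Ioo (0 : ℝ) 1, ∫⁻ s in Ioo (0 : ℝ) 1,
        ENNReal.ofReal (x ^ (c - 1) * (1 - s) ^ (-a) * (1 - x * s) ^ (-p)) =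
      ENNReal.ofReal (hypMoment p (2 - a) c / (1 - a)) := by
  have hq : 1 < 2 - a := by linarith
  have h := integral_hyp2F1_mul_rpow hp hc
  rw [← lintegral_ofReal_eq_of_integral_eq ⟨h.1.div_const (1 - a), by rw [integral_div, h.2]⟩
    (ae_restrict_of_forall_mem measurableSet_Ioo fun x hx =>
      div_nonneg (hyp2F1_mul_rpow_nonneg hp hq hx) (sub_pos.2 ha).le)]
  refine setLIntegral_congr_fun measurableSet_Ioo fun x hx => ?_
  have hx0 := rpow_nonneg hx.1.le (c - 1)
  rw [mul_comm (hyp2F1 _ _ _ _), mul_div_assoc, ENNReal.ofReal_mul hx0,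
    ← lintegral_hyp2F1 hp ha (abs_lt_one_of_mem_Ioo hx),
    ← lintegral_const_mul' _ _ ENNReal.ofReal_ne_top]
  refine lintegral_congr fun s => ?_
  rw [← ENNReal.ofReal_mul hx0]
  ring_nf

lemma lintegral_innerCoeff (hd : |d| < 1) (hc : 0 < c) :
    ∫⁻ x in Ioo (0 : ℝ) 1, ∫⁻ v in Ioo (0 : ℝ) 1, ∫⁻ σ in Ioo (0 : ℝ) 1, ENNReal.ofReal
        (x ^ (c - 1) * (1 - x * v) ^ (-d) * v ^ (1 - d) * (1 - v * σ) ^ (-d) * (1 - σ) ^ (-d)) =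
      ENNReal.ofReal ((∑' n : ℕ, innerCoeff d n / (n + c)) / (1 - d)) := by
  have hpq := abs_lt_two_sub hd
  have hq := one_lt_two_sub hd
  have hd1 : d < 1 := (abs_lt.1 hd).2
  have hnonneg : ∀ x ∈ Ioo (0 : ℝ) 1, ∀ y ∈ Ioo (0 : ℝ) 1,
      0 ≤ (1 - x * y) ^ (-d) * (hyp2F1 1 d (2 - d) y * y ^ (2 - d - 1)) := fun x hx y hy =>
    mul_nonneg (rpow_nonneg (one_sub_mul_pos (abs_lt_one_of_mem_Ioo hx) hy).le _)
      (hyp2F1_mul_rpow_nonneg hpq hq hy)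
  have h := integral_powerSeries_mul_rpow hc (summable_innerCoeff_div hd hc)
    fun x hx => (hasSum_innerCoeff hd hx).2
  rw [← lintegral_ofReal_eq_of_integral_eq ⟨h.1.div_const (1 - d), by rw [integral_div, h.2]⟩
    (ae_restrict_of_forall_mem measurableSet_Ioo fun x hx => div_nonneg (mul_nonneg
      (setIntegral_nonneg measurableSet_Ioo (hnonneg x hx)) (rpow_nonneg hx.1.le _))
        (sub_pos.2 hd1).le)]
  refine setLIntegral_congr_fun measurableSet_Ioo fun x hx => ?_
  rw [← integral_mul_const, ← integral_div, ofReal_integral_eq_lintegral_ofReal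
    (((hasSum_innerCoeff hd hx).1.mul_const _).div_const _)
    (ae_restrict_of_forall_mem measurableSet_Ioo fun y hy => div_nonneg (mul_nonneg
      (hnonneg x hx y hy) (rpow_nonneg hx.1.le _)) (sub_pos.2 hd1).le)]
  refine setLIntegral_congr_fun measurableSet_Ioo fun v hv => ?_
  have hweight : 0 ≤ x ^ (c - 1) * (1 - x * v) ^ (-d) * v ^ (1 - d) :=
    mul_nonneg (mul_nonneg (rpow_nonneg hx.1.le _)
      (rpow_nonneg (one_sub_mul_pos (abs_lt_one_of_mem_Ioo hx) hv).le _)) (rpow_nonneg hv.1.le _)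
  simp only [mul_assoc _ ((1 - v * _) ^ (-d)), ENNReal.ofReal_mul hweight]
  rw [lintegral_const_mul' _ _ ENNReal.ofReal_ne_top,
    lintegral_hyp2F1 hpq hd1 (abs_lt_one_of_mem_Ioo hv), ← ENNReal.ofReal_mul hweight]
  ring_nf

lemma innerCoeff_nonneg (hd0 : 0 ≤ d) (hd1 : d < 1) (n : ℕ) : 0 ≤ innerCoeff d n := by
  have hd : |d| < 1 := by rwa [abs_of_nonneg hd0]
  have hq := one_lt_two_sub hd
  exact mul_nonneg (pochRatio_nonneg hd0 one_pos n)
    (hypMoment_nonneg (abs_lt_two_sub hd) hq (by positivity))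

lemma tsum_innerCoeff_div (hd0 : 0 ≤ d) (hd1 : d < 1) (hc : 1 - d < c) :
    (∑' n : ℕ, innerCoeff d n / (n + c)) + hypMoment d 1 c * hypMoment d (2 - d) (c + d - 1) =
      hypMoment d 1 (1 - d) * hypMoment (2 * d - 1) (2 - d) (c + d - 1) := by
  have hd : |d| < 1 := by rwa [abs_of_nonneg hd0]
  have hpos : 0 < 1 - d := sub_pos.2 hd1
  have hc0 : 0 < c := hpos.trans hc
  have hc' : 0 < c + d - 1 := by linarith
  have hpq := abs_lt_two_sub hd
  have hpq' : |2 * d - 1| < 2 - d := abs_lt.2 ⟨by linarith, by linarith⟩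
  have hq := one_lt_two_sub hd
  have hbeta := lintegral_ofReal_eq_of_integral_eq (integral_beta hc0 hpos)
    (ae_restrict_of_forall_mem measurableSet_Ioo fun p hp =>
      mul_nonneg (rpow_nonneg hp.1.le _) (rpow_nonneg (sub_pos.2 hp.2).le _))
  have h := lintegral_euler_identity (a := d) (c := c) hd1 hd1
  have hM := lintegral_hypMoment hpq hd1 hc'
  have hR := lintegral_hypMoment hpq' hd1 hc'
  rw [show c + d - 1 - 1 = c + d - 2 by ring] at hM hR
  rw [show -(2 * d - 1) = 1 - d - d by ring] at hR
  rw [sub_sub_cancel_left] at hbeta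
  have hA : 0 ≤ (∑' n : ℕ, innerCoeff d n / (n + c)) / (1 - d) :=
    div_nonneg (tsum_nonneg fun n =>
      div_nonneg (innerCoeff_nonneg hd0 hd1 n) (by positivity)) hpos.le
  have hK0 := (beta_pos hc0 hpos).le
  have hK1 := (beta_pos hpos hpos).le
  have hM0 := div_nonneg (hypMoment_nonneg hpq hq hc') hpos.le
  have hR0 := div_nonneg (hypMoment_nonneg hpq' hq hc') hpos.le
  rw [lintegral_innerCoeff hd hc0, hbeta, hM, hR, ← ENNReal.ofReal_mul hK0,
    ← ENNReal.ofReal_mul hK1, ← ENNReal.ofReal_add hA (mul_nonneg hK0 hM0),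
    ENNReal.ofReal_eq_ofReal_iff (add_nonneg hA (mul_nonneg hK0 hM0)) (mul_nonneg hK1 hR0)] at h
  rw [hypMoment_one_right hd hc0, hypMoment_one_right hd hpos]
  field_simp at h
  rwa [mul_comm d] at h

end MomentIdentity

section DoubleSeries

/-- From `1 / (α β) = 1 / (α (α + β)) + 1 / (β (α + β))` with `α = n + a`, `β = k + e`. -/
lemma hasSum_div_mul_tsum_div {v w : ℕ → ℝ} {a e : ℝ} (ha : 0 < a) (he : 0 < e)
    (hv : Summable fun n : ℕ => v n / (n + a)) (hw : Summable fun k : ℕ => w k / (k + e)) :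
    HasSum (fun n : ℕ => v n / (n + a) * ∑' k : ℕ, w k / (k + (n + (a + e))))
      ((∑' n : ℕ, v n / (n + a)) * (∑' k : ℕ, w k / (k + e)) -
        ∑' k : ℕ, w k / (k + e) * ∑' n : ℕ, v n / (n + (k + (a + e)))) := by
  let f : ℕ × ℕ → ℝ := fun z => v z.1 / (z.1 + a) * (w z.2 / (z.2 + (z.1 + (a + e))))
  have hprod := hv.hasSum.mul hw.hasSum (summable_mul_of_summable_norm hv.norm hw.norm)
  have hf : Summable f := .of_norm_bounded hprod.summable.norm fun z => by
    have hle : z.2 + e ≤ z.2 + (z.1 + (a + e)) := by linarith [z.1.cast_nonneg (α := ℝ)]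
    have hpos : 0 < z.2 + e := by positivity
    rw [norm_mul, norm_mul, norm_div (w _), norm_div (w _), norm_of_nonneg hpos.le,
      norm_of_nonneg (hpos.trans_le hle).le]
    gcongr
  have hsplit : ∀ k n : ℕ, v n / (n + a) * (w k / (k + e)) - f (n, k) =
      w k / (k + e) * (v n / (n + (k + (a + e)))) := fun k n => by
    have hα : 0 < n + a := by positivity
    have hβ : 0 < k + e := by positivity
    change _ - v n / (n + a) * (w k / (k + (n + (a + e)))) = _
    rw [show (k : ℝ) + (n + (a + e)) = n + a + (k + e) by ring,
      show (n : ℝ) + (k + (a + e)) = n + a + (k + e) by ring]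
    generalize n + a = α at *
    generalize k + e = β at *
    field_simp
    ring
  have hrow : ∀ n : ℕ, HasSum (fun k => f (n, k)) _ := fun n =>
    (summable_div_natCast_add (c' := n + (a + e)) he (by positivity) hw).hasSum.mul_left
      (v n / (n + a))
  have hcol : ∀ k : ℕ, HasSum (fun n => v n / (n + a) * (w k / (k + e)) - f (n, k)) _ := fun k =>
    ((summable_div_natCast_add (c' := k + (a + e)) ha (by positivity) hv).hasSum.mul_left
      (w k / (k + e))).congr_fun (hsplit k)
  have hcols := ((Equiv.prodComm ℕ ℕ).hasSum_iff.2 (hprod.sub hf.hasSum)).prod_fiberwise hcol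
  rw [hcols.tsum_eq, sub_sub_cancel]
  exact hf.hasSum.prod_fiberwise hrow

lemma hasSum_pochRatio_div_mul_hypMoment {p q r t a e : ℝ} (hpq : |p| < q) (hrt : |r| < t)
    (ha : 0 < a) (he : 0 < e) :
    HasSum (fun n : ℕ => pochRatio p q n / (n + a) * hypMoment r t (n + (a + e)))
      (hypMoment p q a * hypMoment r t e -
        ∑' k : ℕ, pochRatio r t k / (k + e) * hypMoment p q (k + (a + e))) :=
  hasSum_div_mul_tsum_div ha he (summable_pochRatio_div hpq ha) (summable_pochRatio_div hrt he)

end DoubleSeries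

section Evaluation

variable {p q c d : ℝ}

lemma hypMoment_two_sub (hd : |d| < 1) : (2 - 2 * d) * hypMoment d (2 - d) (2 - d) = 1 := by
  have hd1 : 0 < 1 - d := by linarith [le_abs_self d]
  have h := hypMoment_add_one (abs_lt_two_sub hd) hd1
  rw [show 2 - d - 1 = 1 - d by ring, div_self hd1.ne', show 1 - d + 1 = 2 - d by ring] at h
  linear_combination h

lemma innerCoeff_succ_mul (hd : |d| < 1) (n : ℕ) :
    innerCoeff d (n + 1) * (n + (3 - 2 * d)) =
      innerCoeff d n * (n + d) + (1 - d) * (pochRatio d 1 (n + 1) / (n + 1 + (1 - d))) := by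
  have hq := one_lt_two_sub hd
  have hM := hypMoment_add_one (abs_lt_two_sub hd) (by positivity : 0 < n + (2 - d))
  have hP := pochRatio_succ_mul (p := d) one_pos n
  rw [innerCoeff, innerCoeff, Nat.cast_succ, add_right_comm]
  rw [show (n : ℝ) + 1 + (1 - d) = n + (2 - d) by ring]
  linear_combination pochRatio d 1 (n + 1) * hM + hypMoment d (2 - d) (n + (2 - d)) * hP

lemma double_integral_eq_tsum (hd : |d| < 1) (hc : 0 < c)
    (hsum : Summable fun n : ℕ => innerCoeff d n * hypMoment d (2 - d) (n + c)) :
    (∫ x in (0 : ℝ)..1, ∫ y in (0 : ℝ)..1, x ^ (c - 1) * y ^ (1 - d) * (1 - x * y) ^ (-d) *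
        hyp2F1 1 d (2 - d) x * hyp2F1 1 d (2 - d) y) =
      ∑' n : ℕ, innerCoeff d n * hypMoment d (2 - d) (n + c) := by
  have hpq := abs_lt_two_sub hd
  have hM := integral_pow_mul_hyp2F1 hpq hc
  have h := hasSum_integral_powerSeries_mul (a := innerCoeff d)
    (fun x hx => hyp2F1_mul_rpow_nonneg hpq (one_lt_two_sub hd) hx) (fun n => (hM n).1)
    (by simpa only [(hM _).2] using hsum) fun x hx => (hasSum_innerCoeff hd hx).2
  simp only [(hM _).2] at h
  rw [h.2.tsum_eq]
  simp only [intervalIntegral.integral_of_le zero_le_one, integral_Ioc_eq_integral_Ioo,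
    ← integral_mul_const]
  refine setIntegral_congr_fun measurableSet_Ioo fun x _ =>
    setIntegral_congr_fun measurableSet_Ioo fun y _ => ?_
  rw [show 2 - d - 1 = 1 - d by ring]
  ring

lemma innerCoeff_mul_hypMoment_zero (hd : |d| < 1) :
    (4 - 4 * d) * (innerCoeff d 0 * hypMoment d (2 - d) (4 - 3 * d)) =
      (1 - d) * (1 / (1 - d) * hypMoment d (2 - d) (3 - 3 * d) + innerCoeff d 0 / (3 - 3 * d)) := by
  have hd1 : 0 < 1 - d := by linarith [le_abs_self d]
  have hM := hypMoment_add_one (abs_lt_two_sub hd) (by linarith : 0 < 3 - 3 * d)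
  have hbase := hypMoment_two_sub hd
  have hcancel : (1 - d) * (1 / (1 - d)) = 1 := mul_one_div_cancel hd1.ne'
  rw [show 3 - 3 * d + 1 = 4 - 3 * d by ring] at hM
  rw [innerCoeff, pochRatio_zero, Nat.cast_zero, zero_add, one_mul]
  linear_combination hypMoment d (2 - d) (2 - d) * hM +
    hypMoment d (2 - d) (3 - 3 * d) * (hbase - hcancel)

lemma innerCoeff_mul_hypMoment_succ (hd : |d| < 1) (n : ℕ) :
    (n + 1 + (4 - 4 * d)) *
        (innerCoeff d (n + 1) * hypMoment d (2 - d) ((n + 1 : ℕ) + (4 - 3 * d))) =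
      (1 - d) * (pochRatio d 1 (n + 1) / ((n + 1 : ℕ) + (1 - d)) *
          hypMoment d (2 - d) ((n + 1 : ℕ) + (3 - 3 * d)) +
        innerCoeff d (n + 1) / ((n + 1 : ℕ) + (3 - 3 * d))) +
      (n + d) * (innerCoeff d n * hypMoment d (2 - d) (n + (4 - 3 * d))) := by
  have hM := hypMoment_add_one (c := n + (4 - 3 * d)) (abs_lt_two_sub hd)
    (by linarith [le_abs_self d, n.cast_nonneg (α := ℝ)])
  have hQ := innerCoeff_succ_mul hd n
  push_cast
  rw [show (n : ℝ) + 1 + (4 - 3 * d) = n + (4 - 3 * d) + 1 by ring,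
    show (n : ℝ) + 1 + (3 - 3 * d) = n + (4 - 3 * d) by ring]
  linear_combination innerCoeff d (n + 1) * hM + hypMoment d (2 - d) (n + (4 - 3 * d)) * hQ

lemma hasSum_innerCoeff_mul_hypMoment (hd0 : 0 ≤ d) (hd1 : d < 4 / 5) :
    HasSum (fun n : ℕ => innerCoeff d n * hypMoment d (2 - d) (n + (4 - 3 * d)))
      ((1 - d) * (hypMoment d 1 (1 - d) * hypMoment (2 * d - 1) (2 - d) (2 - 2 * d) -
        (hypMoment d 1 (3 - 3 * d) - hypMoment d 1 (1 - d)) * hypMoment d (2 - d) (2 - 2 * d) -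
        ∑' k : ℕ, pochRatio d (2 - d) k / (k + (2 - 2 * d)) * hypMoment d 1 (k + (3 - 3 * d))) /
        (4 - 5 * d)) := by
  have hd : |d| < 1 := by rw [abs_of_nonneg hd0]; linarith
  have hpq := abs_lt_two_sub hd
  have hP := hasSum_pochRatio_div_mul_hypMoment hd hpq (by linarith : 0 < 1 - d)
    (by linarith : 0 < 2 - 2 * d)
  have hQ := (summable_innerCoeff_div hd (by linarith : 0 < 3 - 3 * d)).hasSum
  have hQval := tsum_innerCoeff_div hd0 (by linarith) (by linarith : 1 - d < 3 - 3 * d)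
  rw [show 1 - d + (2 - 2 * d) = 3 - 3 * d by ring] at hP
  rw [show 3 - 3 * d + d - 1 = 2 - 2 * d by ring] at hQval
  have hT : ∀ n : ℕ, 0 ≤ innerCoeff d n * hypMoment d (2 - d) (n + (4 - 3 * d)) := fun n =>
    mul_nonneg (innerCoeff_nonneg hd0 (by linarith) n) (hypMoment_nonneg hpq (one_lt_two_sub hd)
      (by linarith [n.cast_nonneg (α := ℝ)]))
  convert hasSum_of_recurrence (by linarith) (by linarith : d < 4 - 4 * d) hT
    (by simpa [pochRatio_zero] using innerCoeff_mul_hypMoment_zero hd)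
    (innerCoeff_mul_hypMoment_succ hd) ((hP.add hQ).mul_left (1 - d)) using 2
  · linear_combination -(1 - d) * hQval
  · ring

lemma hypMoment_one_nat_add (hp : |p| < 1) (hc : 0 < c) (k : ℕ) :
    hypMoment p 1 (k + c) = hypMoment p 1 c * (poch c k / poch (c + (1 - p)) k) := by
  have hp1 : 0 < 1 - p := by linarith [le_abs_self p]
  rw [hypMoment_one_right hp (by positivity), hypMoment_one_right hp hc, beta, beta, add_assoc,
    Gamma_nat_add hc, Gamma_nat_add (by positivity)]
  ring

lemma hyp3F2_eq_hypMoment (hc : 0 < c) :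
    hyp3F2 c 1 p (c + 1) q 1 = c * hypMoment p q c := by
  rw [hyp3F2, hypMoment, ← tsum_mul_left]
  refine tsum_congr fun k => ?_
  have hfact : (k.factorial : ℝ) / k.factorial = 1 := div_self (by positivity)
  calc _ = pochRatio c (c + 1) k * pochRatio p q k * (k.factorial / k.factorial) := by
        rw [poch_one, one_pow, pochRatio, pochRatio]; ring
    _ = c * (pochRatio p q k / (k + c)) := by rw [pochRatio_self_add_one hc, hfact]; ring

lemma tsum_pochRatio_div_mul_hypMoment_one {r b : ℝ} (hr : |r| < 1) (hb : 0 < b) (hc : 0 < c) :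
    ∑' k : ℕ, pochRatio p q k / (k + c) * hypMoment r 1 (k + b) =
      hypMoment r 1 b / c * hyp4F3 1 p c b q (c + 1) (b + (1 - r)) 1 := by
  rw [hyp4F3, ← tsum_mul_left]
  refine tsum_congr fun k => ?_
  have hfact : (k.factorial : ℝ) / k.factorial = 1 := div_self (by positivity)
  rw [hypMoment_one_nat_add hr hb]
  calc _ = pochRatio p q k * (c / (k + c)) * (poch b k / poch (b + (1 - r)) k) *
        (hypMoment r 1 b / c) * (k.factorial / k.factorial) := by rw [hfact]; field_simp
    _ = _ := by
        rw [← pochRatio_self_add_one hc, poch_one, one_pow, pochRatio, pochRatio]; ring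

end Evaluation

theorem double_integral_main (d : ℝ) (hd0 : 0 ≤ d) (hd1 : d < 4 / 5) :
    (∫ x in (0:ℝ)..1, ∫ y in (0:ℝ)..1,
      x ^ (3 - 3 * d) * y ^ (1 - d) * (1 - x * y) ^ (-d) *
        hyp2F1 1 d (2 - d) x * hyp2F1 1 d (2 - d) y)
    = Real.Gamma (1 - d) / (2 * (4 - 5 * d)) * (Real.Gamma (1 - d) / Real.Gamma (2 - 2 * d)) *
        hyp3F2 (2 - 2 * d) 1 (2 * d - 1) (3 - 2 * d) (2 - d) 1
      - Real.Gamma (1 - d) / (2 * (4 - 5 * d)) *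
          (Real.Gamma (3 - 3 * d) / Real.Gamma (4 - 4 * d)
            - Real.Gamma (1 - d) / Real.Gamma (2 - 2 * d)) *
          hyp3F2 (2 - 2 * d) 1 d (3 - 2 * d) (2 - d) 1
      - Real.Gamma (1 - d) / (2 * (4 - 5 * d)) *
          (Real.Gamma (3 - 3 * d) / Real.Gamma (4 - 4 * d)) *
          hyp4F3 1 d (2 - 2 * d) (3 - 3 * d) (2 - d) (3 - 2 * d) (4 - 4 * d) 1 := by
  have hd : |d| < 1 := by rw [abs_of_nonneg hd0]; linarith
  have hc1 : 0 < 1 - d := by linarith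
  have hc2 : 0 < 2 - 2 * d := by linarith
  have hc3 : 0 < 3 - 3 * d := by linarith
  have hseries := hasSum_innerCoeff_mul_hypMoment hd0 hd1
  have hintegral := double_integral_eq_tsum hd (by linarith) hseries.summable
  rw [show 4 - 3 * d - 1 = 3 - 3 * d by ring] at hintegral
  rw [hintegral, hseries.tsum_eq, tsum_pochRatio_div_mul_hypMoment_one hd hc3 hc2,
    hypMoment_one_right hd hc1, hypMoment_one_right hd hc3, beta, beta,
    show 1 - d + (1 - d) = 2 - 2 * d by ring,
    show 3 - 3 * d + (1 - d) = 4 - 4 * d by ring, show 3 - 2 * d = 2 - 2 * d + 1 by ring,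
    hyp3F2_eq_hypMoment hc2, hyp3F2_eq_hypMoment hc2]
  have : 4 - 5 * d ≠ 0 := by linarith
  field_simp
end

section
/- Let 0 < d < 1 and let a, b be real numbers with 0 < a < 1 and 0 < b < 1. Then ∫₀¹ (1 - a b z)^{-d} (1 - b z)^{-d} dz = (1/(d-1)) b^{-1} (1-b)^{1-d} (1-ab)^{-d} ₂F₁(1,d;2-d; a(1-b)/(1-ab)) − (1/(d-1)) b^{-1} ₂F₁(1,d;2-d;a). -/
open Real MeasureTheory

/-!
Put `u = 1 - b z`, so that `1 - a b z = v` with `v = 1 - a + a u`, and let `w = a u / v`. Then `w`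
satisfies the logistic equation `u w' = w (1 - w)`, whose right-hand side is the leading coefficient
of the first-order equation `x (1 - x) F' + (s - t x) F = s` satisfied by `F = ₂F₁(1, t; s + 1; x)`.
Hence `u ^ s v ^ (-t) F(w)` is a primitive of `s u ^ (s - 1) v ^ (-t)`, and the integral is its
increment between `u = 1 - b` and `u = 1`.
-/

section PowerSeries

variable {𝕜 E F : Type*} [NontriviallyNormedField 𝕜] [NormedAddCommGroup E] [NormedSpace 𝕜 E]
  [NormedAddCommGroup F] [NormedSpace 𝕜 F] [CompleteSpace F]

-- The Euler operator `y ↦ D f (x + y) y` multiplies the `n`-th homogeneous term by `n`.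
theorem hasSum_nsmul_fderiv_apply {f : E → F} {p : FormalMultilinearSeries 𝕜 E F} {x y : E}
    {r : ENNReal} (hf : HasFPowerSeriesOnBall f p x r) (hy : y ∈ Metric.eball 0 r) :
    HasSum (fun n : ℕ ↦ n • p n fun _ ↦ y) (fderiv 𝕜 f (x + y) y) := by
  have hderiv : HasSum (fun n ↦ p.derivSeries n (fun _ ↦ y) y) (fderiv 𝕜 f (x + y) y) :=
    (hf.fderiv.hasSum hy).mapL (ContinuousLinearMap.apply 𝕜 F y)
  simp only [p.derivSeries_apply_diag] at hderiv
  have hshift := (hasSum_nat_add_iff (f := fun n : ℕ ↦ n • p n fun _ ↦ y) 1).1 hderiv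
  simpa only [Finset.sum_range_one, zero_smul, add_zero] using hshift

end PowerSeries

theorem mem_eball_zero_one_iff {E : Type*} [SeminormedAddGroup E] {x : E} :
    x ∈ Metric.eball (0 : E) 1 ↔ ‖x‖ < 1 := by
  simp [← ofReal_norm]

section Hypergeometric

variable {𝕂 : Type*} [RCLike 𝕂]

theorem one_le_radius_ordinaryHypergeometricSeries (a b c : 𝕂) :
    1 ≤ (ordinaryHypergeometricSeries 𝕂 a b c).radius := by
  by_cases habc : ∀ n : ℕ, (n : 𝕂) ≠ -a ∧ (n : 𝕂) ≠ -b ∧ (n : 𝕂) ≠ -c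
  · exact (ordinaryHypergeometricSeries_radius_eq_one 𝕂 a b c habc).ge
  · obtain ⟨n, hn⟩ : ∃ n : ℕ, a = -n ∨ b = -n ∨ c = -n := by grind
    rcases hn with rfl | rfl | rfl
    · simp only [ordinaryHypergeometric_radius_top_of_neg_nat₁, le_top]
    · simp only [ordinaryHypergeometric_radius_top_of_neg_nat₂, le_top]
    · simp only [ordinaryHypergeometric_radius_top_of_neg_nat₃, le_top]

theorem hasFPowerSeriesOnBall_ordinaryHypergeometric (a b c : 𝕂) :
    HasFPowerSeriesOnBall (₂F₁ a b c) (ordinaryHypergeometricSeries 𝕂 a b c) 0 1 :=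
  have hr := one_le_radius_ordinaryHypergeometricSeries a b c
  (FormalMultilinearSeries.hasFPowerSeriesOnBall _ (one_pos.trans_le hr)).mono one_pos hr

theorem hasSum_ordinaryHypergeometric (a b c : 𝕂) {x : 𝕂} (hx : ‖x‖ < 1) :
    HasSum (fun n ↦ ordinaryHypergeometricCoefficient a b c n * x ^ n) (₂F₁ a b c x) := by
  simpa only [ordinaryHypergeometricSeries, FormalMultilinearSeries.ofScalars_apply_eq, smul_eq_mul,
    zero_add] using (hasFPowerSeriesOnBall_ordinaryHypergeometric a b c).hasSum
      (mem_eball_zero_one_iff.2 hx)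

theorem differentiableAt_ordinaryHypergeometric (a b c : 𝕂) {x : 𝕂} (hx : ‖x‖ < 1) :
    DifferentiableAt 𝕂 (₂F₁ a b c) x :=
  (hasFPowerSeriesOnBall_ordinaryHypergeometric a b c).differentiableOn.differentiableAt
    (Metric.isOpen_eball.mem_nhds (mem_eball_zero_one_iff.2 hx))

theorem hasSum_mul_deriv_ordinaryHypergeometric (a b c : 𝕂) {x : 𝕂} (hx : ‖x‖ < 1) :
    HasSum (fun n : ℕ ↦ n * (ordinaryHypergeometricCoefficient a b c n * x ^ n))
      (x * deriv (₂F₁ a b c) x) := by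
  simpa only [ordinaryHypergeometricSeries, FormalMultilinearSeries.ofScalars_apply_eq, smul_eq_mul,
    nsmul_eq_mul, zero_add, fderiv_eq_smul_deriv] using
    hasSum_nsmul_fderiv_apply (hasFPowerSeriesOnBall_ordinaryHypergeometric a b c)
      (mem_eball_zero_one_iff.2 hx)

theorem ordinaryHypergeometricCoefficient_one_succ (b c : 𝕂) {n : ℕ} (hc : c + n ≠ 0) :
    (c + n) * ordinaryHypergeometricCoefficient 1 b c (n + 1) =
      (b + n) * ordinaryHypergeometricCoefficient 1 b c n := by
  have hfact (k : ℕ) : (k.factorial : 𝕂)⁻¹ * (ascPochhammer 𝕂 k).eval 1 = 1 := by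
    rw [ascPochhammer_eval_one, inv_mul_cancel₀ (Nat.cast_ne_zero.2 k.factorial_ne_zero)]
  simp only [ordinaryHypergeometricCoefficient, hfact, one_mul]
  rw [ascPochhammer_succ_eval, ascPochhammer_succ_eval]
  field_simp

/- Because the first parameter is `1`, the hypergeometric equation integrates once to this
first-order equation: the `n!` cancels and the coefficient recurrence has degree one in `n`. -/
theorem ordinaryHypergeometric_one_ode (b c : 𝕂) (hc : ∀ n : ℕ, c + n ≠ 0) {x : 𝕂}
    (hx : ‖x‖ < 1) :
    x * (1 - x) * deriv (₂F₁ 1 b c) x + (c - 1 - b * x) * ₂F₁ 1 b c x = c - 1 := by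
  set coeff := ordinaryHypergeometricCoefficient 1 b c with hcoeff
  have hF := hasSum_ordinaryHypergeometric 1 b c hx
  have hF' := hasSum_mul_deriv_ordinaryHypergeometric 1 b c hx
  have hleft : HasSum (fun n : ℕ ↦ (n + (c - 1)) * (coeff n * x ^ n))
      (x * deriv (₂F₁ 1 b c) x + (c - 1) * ₂F₁ 1 b c x) := by
    simpa only [add_mul] using hF'.add (hF.mul_left (c - 1))
  have hright : HasSum (fun n : ℕ ↦ ((n + 1 : ℕ) + (c - 1)) * (coeff (n + 1) * x ^ (n + 1)))
      (x * (x * deriv (₂F₁ 1 b c) x + b * ₂F₁ 1 b c x)) := by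
    refine ((hF'.add (hF.mul_left b)).mul_left x).congr_fun ?_
    intro n
    push_cast
    linear_combination x ^ (n + 1) * ordinaryHypergeometricCoefficient_one_succ b c (hc n)
  have hzero : coeff 0 = 1 := by simp [hcoeff, ordinaryHypergeometricCoefficient]
  have hshift := hleft.unique ((hasSum_nat_add_iff 1).1 hright)
  simp only [Finset.sum_range_one, hzero, Nat.cast_zero, pow_zero] at hshift
  linear_combination hshift

end Hypergeometric

theorem hyp2F1_eq_ordinaryHypergeometric (a b c z : ℝ) : hyp2F1 a b c z = ₂F₁ a b c z := by
  rw [ordinaryHypergeometric_eq_tsum]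
  refine tsum_congr fun n ↦ ?_
  simp only [poch, smul_eq_mul]
  ring

/-- A primitive of `u ↦ s * ((1 - a + a * u) ^ (-t) * u ^ (s - 1))`, used to evaluate integrals of
incomplete beta type. It is meaningful for `0 < u` and `|a * u| < 1 - a + a * u`: the second
inequality says that `1 - a + a * u` is positive and the hypergeometric argument lies in `(-1, 1)`.
-/
noncomputable def betaPrimitive (a s t u : ℝ) : ℝ :=
  u ^ s * (1 - a + a * u) ^ (-t) * ₂F₁ 1 t (s + 1) (a * u / (1 - a + a * u))

theorem betaPrimitive_one (a s t : ℝ) : betaPrimitive a s t 1 = ₂F₁ 1 t (s + 1) a := by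
  simp [betaPrimitive]

theorem hasDerivAt_one_sub_add_mul (a u : ℝ) : HasDerivAt (fun u ↦ 1 - a + a * u) a u := by
  simpa using ((hasDerivAt_id u).const_mul a).const_add (1 - a)

theorem hasDerivAt_mul_div_one_sub_add_mul {a u : ℝ} (hv : 1 - a + a * u ≠ 0) :
    HasDerivAt (fun u ↦ a * u / (1 - a + a * u)) (a * (1 - a) / (1 - a + a * u) ^ 2) u := by
  refine (((hasDerivAt_id u).const_mul a).div (hasDerivAt_one_sub_add_mul a u) hv).congr_deriv ?_
  simp only [id_eq]
  ring

theorem hasDerivAt_betaPrimitive {a s t u : ℝ} (hs : ∀ n : ℕ, s + 1 + n ≠ 0) (hu : 0 < u)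
    (hau : |a * u| < 1 - a + a * u) :
    HasDerivAt (betaPrimitive a s t) (s * ((1 - a + a * u) ^ (-t) * u ^ (s - 1))) u := by
  have hv : 0 < 1 - a + a * u := (abs_nonneg _).trans_lt hau
  have hdv := hasDerivAt_one_sub_add_mul a u
  have hdw := hasDerivAt_mul_div_one_sub_add_mul hv.ne'
  set v := 1 - a + a * u with hvdef
  set w := a * u / v with hwdef
  have hw : ‖w‖ < 1 := by rwa [Real.norm_eq_abs, abs_div, abs_of_pos hv, div_lt_one hv]
  have hode := ordinaryHypergeometric_one_ode t (s + 1) hs hw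
  have hdF := (differentiableAt_ordinaryHypergeometric 1 t (s + 1) hw).hasDerivAt.comp u hdw
  refine (((hasDerivAt_rpow_const (p := s) (Or.inl hu.ne')).mul
    (hdv.rpow_const (p := -t) (Or.inl hv.ne'))).mul hdF).congr_deriv ?_
  have hu_rpow : u ^ s = u * u ^ (s - 1) := by rw [rpow_sub_one hu.ne', mul_div_cancel₀ _ hu.ne']
  have hv_rpow : v ^ (-t) = v * v ^ (-t - 1) := by
    rw [rpow_sub_one hv.ne', mul_div_cancel₀ _ hv.ne']
  have hvw : v * w = a * u := mul_div_cancel₀ _ hv.ne'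
  have hw_euler : u * (a * (1 - a) / v ^ 2) = w * (1 - w) := by
    rw [hwdef]
    field_simp
    rw [hvdef]
    ring
  simp only [Pi.mul_apply, Function.comp_apply, ← hvdef, ← hwdef]
  rw [hu_rpow, hv_rpow]
  linear_combination u ^ (s - 1) * v ^ (-t - 1) *
    (v * hode + v * deriv (₂F₁ 1 t (s + 1)) w * hw_euler + t * ₂F₁ 1 t (s + 1) w * hvw)

theorem ordConnected_setOf_abs_mul_lt (a : ℝ) :
    {u : ℝ | 0 < u ∧ |a * u| < 1 - a + a * u}.OrdConnected := by
  refine ⟨fun x hx y hy u hu ↦ ⟨hx.1.trans_le hu.1, ?_⟩⟩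
  have hx' := abs_lt.1 hx.2
  have hy' := abs_lt.1 hy.2
  rcases le_total 0 a with ha | ha
  · have := mul_le_mul_of_nonneg_left hu.1 ha
    exact abs_lt.2 ⟨by linarith, by linarith⟩
  · have := mul_le_mul_of_nonpos_left hu.2 ha
    exact abs_lt.2 ⟨by linarith, by linarith⟩

theorem mul_integral_rpow_mul_rpow {a s t x y : ℝ} (hs : ∀ n : ℕ, s + 1 + n ≠ 0)
    (hx : 0 < x) (hax : |a * x| < 1 - a + a * x) (hy : 0 < y) (hay : |a * y| < 1 - a + a * y) :
    s * ∫ u in x..y, (1 - a + a * u) ^ (-t) * u ^ (s - 1) =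
      betaPrimitive a s t y - betaPrimitive a s t x := by
  have hdom := (ordConnected_setOf_abs_mul_lt a).uIcc_subset ⟨hx, hax⟩ ⟨hy, hay⟩
  rw [← intervalIntegral.integral_const_mul]
  refine intervalIntegral.integral_eq_sub_of_hasDerivAt
    (fun u hu ↦ hasDerivAt_betaPrimitive hs (hdom hu).1 (hdom hu).2)
    (.const_mul (ContinuousOn.intervalIntegrable fun u hu ↦ ContinuousAt.continuousWithinAt ?_) s)
  have hu₀ : u ≠ 0 := (hdom hu).1.ne'
  have hv₀ : 1 - a + a * u ≠ 0 := ((abs_nonneg _).trans_lt (hdom hu).2).ne'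
  exact ((hasDerivAt_one_sub_add_mul a u).continuousAt.rpow_const (Or.inl hv₀)).mul
    (continuousAt_rpow_const u _ (Or.inl hu₀))

theorem single_integral_two_linear_factors_general (d e a b : ℝ) (he : ∀ n : ℕ, e ≠ n + 1)
    (ha : |a| < 1) (hb0 : b ≠ 0) (hb1 : b < 1) (hab : |a * (1 - b)| < 1 - a * b) :
    (∫ z in (0:ℝ)..1, (1 - a * b * z) ^ (-d) * (1 - b * z) ^ (-e))
    = 1 / (e - 1) * b⁻¹ * (1 - b) ^ (1 - e) * (1 - a * b) ^ (-d) *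
        hyp2F1 1 d (2 - e) (a * (1 - b) / (1 - a * b))
      - 1 / (e - 1) * b⁻¹ * hyp2F1 1 d (2 - e) a := by
  have hs₀ : 1 - e ≠ 0 := fun h ↦ he 0 (by push_cast; linarith)
  have hs (n : ℕ) : 1 - e + 1 + n ≠ 0 := fun h ↦ he (n + 1) (by push_cast; linarith)
  have hv : 1 - a + a * (1 - b) = 1 - a * b := by ring
  have hsubst : ∫ z in (0:ℝ)..1, (1 - a * b * z) ^ (-d) * (1 - b * z) ^ (-e) =
      b⁻¹ * ∫ u in (1 - b)..1, (1 - a + a * u) ^ (-d) * u ^ (1 - e - 1) := by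
    have h := intervalIntegral.integral_comp_sub_mul (a := 0) (b := 1)
      (fun u ↦ (1 - a + a * u) ^ (-d) * u ^ (1 - e - 1)) hb0 1
    simp only [mul_one, mul_zero, sub_zero, smul_eq_mul] at h
    rw [← h]
    congr! 3 with z <;> ring_nf
  have hint := mul_integral_rpow_mul_rpow (t := d) hs (sub_pos.2 hb1) (by rwa [hv]) one_pos
    (by simpa using ha)
  rw [betaPrimitive_one, betaPrimitive, hv, show 1 - e + 1 = 2 - e by ring] at hint
  rw [hsubst, (eq_inv_mul_iff_mul_eq₀ hs₀).2 hint, hyp2F1_eq_ordinaryHypergeometric,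
    hyp2F1_eq_ordinaryHypergeometric, show (1 - e)⁻¹ = -(e - 1)⁻¹ by rw [← neg_sub, inv_neg]]
  ring

theorem single_integral_two_linear_factors (d a b : ℝ) (hd0 : 0 < d) (hd1 : d < 1)
    (ha0 : 0 < a) (ha1 : a < 1) (hb0 : 0 < b) (hb1 : b < 1) :
    (∫ z in (0:ℝ)..1, (1 - a * b * z) ^ (-d) * (1 - b * z) ^ (-d))
    = 1 / (d - 1) * b⁻¹ * (1 - b) ^ (1 - d) * (1 - a * b) ^ (-d) *
        hyp2F1 1 d (2 - d) (a * (1 - b) / (1 - a * b))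
      - 1 / (d - 1) * b⁻¹ * hyp2F1 1 d (2 - d) a := by
  have hd (n : ℕ) : d ≠ n + 1 := by have := n.cast_nonneg (α := ℝ); linarith
  have hab : |a * (1 - b)| < 1 - a * b := by
    rw [abs_of_pos (mul_pos ha0 (sub_pos.2 hb1))]; linarith
  exact single_integral_two_linear_factors_general d d a b hd (abs_lt.2 ⟨by linarith, ha1⟩)
    hb0.ne' hb1 hab
end

section
/- Let 0 ≤ d < 1 and let a, b be real numbers with a > -1, b > -1 and a ≠ b. Then ∫₀¹∫₀¹ x^{a} y^{b} (1-xy)^{-d} dx dy = [Γ(1-d)/(b-a)] · (Γ(a+1)/Γ(a+2-d) − Γ(b+1)/Γ(b+2-d)). -/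
open Real MeasureTheory

/-!
The substitution `t = x y` in the inner integral followed by an exchange of the order of
integration over `0 < t < x < 1` gives, whenever the last integral converges absolutely,
`∫₀¹ ∫₀¹ xᵃ yᵇ g(xy) dy dx = ∫₀¹ tᵇ g(t) (∫ₜ¹ xᵃ⁻ᵇ⁻¹ dx) dt = (b - a)⁻¹ ∫₀¹ (tᵃ - tᵇ) g(t) dt`.
For `g(t) = (1 - t)⁻ᵈ` the right-hand side is a difference of two Beta integrals.
-/

open Set Function

/-- The triangle `α < t < x ≤ β`, as a set of pairs `(x, t)`. It is the domain of
integration in Dirichlet's formula for exchanging iterated integrals. The boundary is chosen so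
that its slices in both directions are indexed by `Ioc α β`. -/
def lowerTriangle (α β : ℝ) : Set (ℝ × ℝ) := {p | α < p.2 ∧ p.2 < p.1 ∧ p.1 ≤ β}

section Triangle

variable {α β : ℝ}

lemma mem_lowerTriangle_iff {x t : ℝ} :
    (x, t) ∈ lowerTriangle α β ↔ x ∈ Ioc α β ∧ t ∈ Ioo α x := by
  simp only [lowerTriangle, mem_ofPred_eq, mem_Ioc, mem_Ioo]
  grind

lemma mem_lowerTriangle_iff_swap {x t : ℝ} :
    (x, t) ∈ lowerTriangle α β ↔ t ∈ Ioc α β ∧ x ∈ Ioc t β := by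
  simp only [lowerTriangle, mem_ofPred_eq, mem_Ioc]
  grind

lemma measurableSet_lowerTriangle : MeasurableSet (lowerTriangle α β) :=
  (measurableSet_lt measurable_const measurable_snd).inter
    ((measurableSet_lt measurable_snd measurable_fst).inter
      (measurableSet_le measurable_fst measurable_const))

variable {E : Type*} [NormedAddCommGroup E]

lemma indicator_lowerTriangle (F : ℝ → ℝ → E) (x t : ℝ) :
    (lowerTriangle α β).indicator (uncurry F) (x, t) =
      (Ioc α β).indicator (fun x ↦ (Ioo α x).indicator (F x) t) x := by
  classical
  simp only [indicator_apply, mem_lowerTriangle_iff, ite_and, uncurry_apply_pair]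

lemma indicator_lowerTriangle_swap (F : ℝ → ℝ → E) (x t : ℝ) :
    (lowerTriangle α β).indicator (uncurry F) (x, t) =
      (Ioc α β).indicator (fun t ↦ (Ioc t β).indicator (F · t) x) t := by
  classical
  simp only [indicator_apply, mem_lowerTriangle_iff_swap, ite_and, uncurry_apply_pair]

variable [NormedSpace ℝ E]

theorem integral_integral_swap_lowerTriangle {F : ℝ → ℝ → E} (hαβ : α ≤ β)
    (hF : IntegrableOn (uncurry F) (lowerTriangle α β)) :
    ∫ x in α..β, ∫ t in α..x, F x t = ∫ t in α..β, ∫ x in t..β, F x t := by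
  have hswap := integral_integral_swap
    (f := fun x t ↦ (lowerTriangle α β).indicator (uncurry F) (x, t))
    ((integrable_indicator_iff measurableSet_lowerTriangle).2 hF)
  conv_lhs at hswap => simp only [indicator_lowerTriangle, integral_indicator₂]
  simp only [indicator_lowerTriangle_swap, integral_indicator₂,
    integral_indicator measurableSet_Ioc, integral_indicator measurableSet_Ioo] at hswap
  rw [intervalIntegral.integral_of_le hαβ, intervalIntegral.integral_of_le hαβ]
  calc ∫ x in Ioc α β, ∫ t in α..x, F x t
      = ∫ x in Ioc α β, ∫ t in Ioo α x, F x t :=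
        setIntegral_congr_fun measurableSet_Ioc fun x hx ↦ by
          rw [intervalIntegral.integral_of_le hx.1.le, integral_Ioc_eq_integral_Ioo]
    _ = ∫ t in Ioc α β, ∫ x in Ioc t β, F x t := hswap
    _ = ∫ t in Ioc α β, ∫ x in t..β, F x t :=
        setIntegral_congr_fun measurableSet_Ioc fun t ht ↦
          (intervalIntegral.integral_of_le ht.2).symm

theorem integrableOn_lowerTriangle_smul {φ : ℝ → ℝ} {f : ℝ → E}
    (hφ : LocallyIntegrableOn φ (Ioc α β))
    (hf : AEStronglyMeasurable f (volume.restrict (Ioc α β)))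
    (h : IntegrableOn (fun t ↦ (∫ x in t..β, ‖φ x‖) • f t) (Ioc α β)) :
    IntegrableOn (uncurry fun x t ↦ φ x • f t) (lowerTriangle α β) := by
  have hsub : lowerTriangle α β ⊆ Ioc α β ×ˢ Ioc α β := fun _ hp ↦
    ⟨(mem_lowerTriangle_iff.1 hp).1, (mem_lowerTriangle_iff_swap.1 hp).1⟩
  have hmeas : AEStronglyMeasurable (uncurry fun x t ↦ φ x • f t)
      (volume.restrict (lowerTriangle α β)) := by
    have hprod := hφ.aestronglyMeasurable.comp_fst.smul hf.comp_snd
    rw [Measure.prod_restrict] at hprod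
    exact hprod.mono_set hsub
  rw [← integrable_indicator_iff measurableSet_lowerTriangle, Measure.volume_eq_prod,
    integrable_prod_iff'
      ((aestronglyMeasurable_indicator_iff measurableSet_lowerTriangle).2 hmeas)]
  refine ⟨.of_forall fun t ↦ ?_, ?_⟩
  · simp only [indicator_lowerTriangle_swap]
    by_cases ht : t ∈ Ioc α β
    · have hφt : IntegrableOn φ (Ioc t β) :=
        (hφ.integrableOn_compact_subset (Icc_subset_Ioc ht.1 le_rfl) isCompact_Icc).mono_set
          Ioc_subset_Icc_self
      simpa only [indicator_of_mem ht] using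
        IntegrableOn.integrable_indicator (hφt.smul_const (f t)) measurableSet_Ioc
    · simp [ht]
  · refine ((integrable_indicator_iff measurableSet_Ioc).2 h.norm).congr (.of_forall fun t ↦ ?_)
    simp only [indicator_lowerTriangle_swap]
    by_cases ht : t ∈ Ioc α β
    · simp only [indicator_of_mem ht, norm_indicator_eq_indicator_norm, norm_smul,
        integral_indicator measurableSet_Ioc, integral_mul_const,
        intervalIntegral.integral_of_le ht.2]
      rw [Real.norm_of_nonneg (integral_nonneg fun _ ↦ norm_nonneg _)]
    · simp [ht]

end Triangle

section MultiplicativeKernel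

variable {E : Type*} [NormedAddCommGroup E] [NormedSpace ℝ E] {a b : ℝ}

lemma integral_rpow_mul_rpow_smul_comp_mul (g : ℝ → E) {x : ℝ} (hx : 0 < x) :
    ∫ y in (0 : ℝ)..1, (x ^ a * y ^ b) • g (x * y) =
      ∫ t in (0 : ℝ)..x, x ^ (a - b - 1) • t ^ b • g t := by
  have hscale := intervalIntegral.smul_integral_comp_mul_left (a := 0) (b := 1)
    (fun t ↦ x ^ (a - b - 1) • t ^ b • g t) x
  simp only [mul_zero, mul_one] at hscale
  rw [← hscale, ← intervalIntegral.integral_smul]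
  refine intervalIntegral.integral_congr fun y hy ↦ ?_
  rw [uIcc_of_le zero_le_one] at hy
  have hxa : x ^ a = x * x ^ (a - b - 1) * x ^ b := by
    rw [mul_comm x, ← Real.rpow_add_one hx.ne', ← Real.rpow_add hx]
    ring_nf
  simp only [smul_smul]
  rw [hxa, Real.mul_rpow hx.le hy.1]
  ring_nf

lemma aestronglyMeasurable_rpow_smul_of_sub (hab : a ≠ b) {g : ℝ → E}
    (hg : IntervalIntegrable (fun t ↦ (t ^ a - t ^ b) • g t) volume 0 1) :
    AEStronglyMeasurable (fun t ↦ t ^ b • g t) (volume.restrict (Ioc 0 1)) := by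
  have hquot : Measurable fun t : ℝ ↦ t ^ b / (t ^ a - t ^ b) := by fun_prop
  rw [← restrict_Ioo_eq_restrict_Ioc]
  refine (hquot.aestronglyMeasurable.smul
    (hg.1.aestronglyMeasurable.mono_set Ioo_subset_Ioc_self)).congr ?_
  filter_upwards [ae_restrict_mem measurableSet_Ioo] with t ht
  have hne : t ^ a - t ^ b ≠ 0 :=
    sub_ne_zero.2 fun h ↦ hab ((Real.rpow_right_inj ht.1 ht.2.ne).1 h)
  rw [Pi.smul_apply', smul_smul, div_mul_cancel₀ _ hne]

lemma integral_rpow_smul_rpow_smul {t : ℝ} (hab : a ≠ b) (ht : 0 < t) (e : E) :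
    (∫ x in t..1, x ^ (a - b - 1)) • t ^ b • e = (b - a)⁻¹ • (t ^ a - t ^ b) • e := by
  have hsub : a - b ≠ 0 := sub_ne_zero.2 hab
  have hsub' : b - a ≠ 0 := sub_ne_zero.2 hab.symm
  have htb : t ^ b ≠ 0 := (Real.rpow_pos_of_pos ht b).ne'
  have h0 : (0 : ℝ) ∉ uIcc t 1 := notMem_uIcc_of_lt ht one_pos
  have hpow : ∫ x in t..1, x ^ (a - b - 1) = (1 - t ^ (a - b)) / (a - b) := by
    rw [integral_rpow (.inr ⟨fun h ↦ hsub (by linarith), h0⟩), sub_add_cancel, Real.one_rpow]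
  rw [hpow, Real.rpow_sub ht, smul_smul, smul_smul]
  congr 1
  field_simp
  ring

theorem integral_integral_rpow_mul_rpow_smul_comp_mul [CompleteSpace E] {g : ℝ → E} (hab : a ≠ b)
    (hg : IntervalIntegrable (fun t ↦ (t ^ a - t ^ b) • g t) volume 0 1) :
    ∫ x in (0 : ℝ)..1, ∫ y in (0 : ℝ)..1, (x ^ a * y ^ b) • g (x * y) =
      (b - a)⁻¹ • ∫ t in (0 : ℝ)..1, (t ^ a - t ^ b) • g t := by
  have hφ : LocallyIntegrableOn (fun x : ℝ ↦ x ^ (a - b - 1)) (Ioc 0 1) :=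
    ContinuousOn.locallyIntegrableOn
      (fun x hx ↦ (Real.continuousAt_rpow_const x _ (.inl hx.1.ne')).continuousWithinAt)
      measurableSet_Ioc
  have hnorm {t : ℝ} (ht : t ∈ Ioc (0 : ℝ) 1) :
      ∫ x in t..1, ‖x ^ (a - b - 1)‖ = ∫ x in t..1, x ^ (a - b - 1) :=
    intervalIntegral.integral_congr fun x hx ↦ by
      rw [uIcc_of_le ht.2] at hx
      exact Real.norm_of_nonneg (Real.rpow_nonneg (ht.1.le.trans hx.1) _)
  have hint : IntegrableOn (fun t ↦ (∫ x in t..1, ‖x ^ (a - b - 1)‖) • t ^ b • g t) (Ioc 0 1) :=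
    IntegrableOn.congr_fun (hg.1.smul (b - a)⁻¹)
      (fun _ ht ↦ by simp only [hnorm ht, integral_rpow_smul_rpow_smul hab ht.1, Pi.smul_apply])
      measurableSet_Ioc
  calc ∫ x in (0 : ℝ)..1, ∫ y in (0 : ℝ)..1, (x ^ a * y ^ b) • g (x * y)
      = ∫ x in (0 : ℝ)..1, ∫ t in (0 : ℝ)..x, x ^ (a - b - 1) • t ^ b • g t :=
        intervalIntegral.integral_congr_Ioo_of_le zero_le_one fun _ hx ↦
          integral_rpow_mul_rpow_smul_comp_mul g hx.1
    _ = ∫ t in (0 : ℝ)..1, ∫ x in t..1, x ^ (a - b - 1) • t ^ b • g t :=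
        integral_integral_swap_lowerTriangle zero_le_one
          (integrableOn_lowerTriangle_smul hφ (aestronglyMeasurable_rpow_smul_of_sub hab hg) hint)
    _ = ∫ t in (0 : ℝ)..1, (b - a)⁻¹ • (t ^ a - t ^ b) • g t :=
        intervalIntegral.integral_congr_Ioo_of_le zero_le_one fun _ ht ↦ by
          simp only [intervalIntegral.integral_smul_const, integral_rpow_smul_rpow_smul hab ht.1]
    _ = (b - a)⁻¹ • ∫ t in (0 : ℝ)..1, (t ^ a - t ^ b) • g t :=
        intervalIntegral.integral_smul _ _

end MultiplicativeKernel

section Beta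

variable {u v : ℝ}

lemma ofReal_rpow_mul_one_sub_rpow {t : ℝ} (ht : t ∈ Icc (0 : ℝ) 1) :
    ((t ^ (u - 1) * (1 - t) ^ (v - 1) : ℝ) : ℂ) =
      (t : ℂ) ^ ((u : ℂ) - 1) * (1 - (t : ℂ)) ^ ((v : ℂ) - 1) := by
  rw [Complex.ofReal_mul, Complex.ofReal_cpow ht.1, Complex.ofReal_cpow (sub_nonneg.2 ht.2)]
  push_cast
  rfl

lemma intervalIntegrable_rpow_mul_one_sub_rpow (hu : 0 < u) (hv : 0 < v) :
    IntervalIntegrable (fun t : ℝ ↦ t ^ (u - 1) * (1 - t) ^ (v - 1)) volume 0 1 := by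
  have hC := Complex.betaIntegral_convergent (u := u) (v := v) (by simpa) (by simpa)
  rw [intervalIntegrable_iff_integrableOn_Ioc_of_le zero_le_one] at hC ⊢
  refine IntegrableOn.congr_fun hC.re (fun t ht ↦ ?_) measurableSet_Ioc
  simp only [← ofReal_rpow_mul_one_sub_rpow (Ioc_subset_Icc_self ht)]
  exact Complex.ofReal_re _

lemma integral_rpow_mul_one_sub_rpow (hu : 0 < u) (hv : 0 < v) :
    ∫ t in (0 : ℝ)..1, t ^ (u - 1) * (1 - t) ^ (v - 1) = ProbabilityTheory.beta u v := by
  rw [ProbabilityTheory.beta_eq_betaIntegralReal u v hu hv, Complex.betaIntegral,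
    ← Complex.ofReal_re (∫ t in (0 : ℝ)..1, _), ← intervalIntegral.integral_ofReal]
  congr 1
  refine intervalIntegral.integral_congr fun t ht ↦ ?_
  rw [uIcc_of_le zero_le_one] at ht
  exact ofReal_rpow_mul_one_sub_rpow ht

end Beta

theorem double_integral_power_weights_general (d a b : ℝ) (hd : d < 1)
    (ha : -1 < a) (hb : -1 < b) (hab : a ≠ b) :
    (∫ x in (0:ℝ)..1, ∫ y in (0:ℝ)..1, x ^ a * y ^ b * (1 - x * y) ^ (-d))
    = Real.Gamma (1 - d) / (b - a) *
        (Real.Gamma (a + 1) / Real.Gamma (a + 2 - d)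
          - Real.Gamma (b + 1) / Real.Gamma (b + 2 - d)) := by
  have hint {c : ℝ} (hc : -1 < c) :
      IntervalIntegrable (fun t : ℝ ↦ t ^ c * (1 - t) ^ (-d)) volume 0 1 := by
    simpa using intervalIntegrable_rpow_mul_one_sub_rpow (neg_lt_iff_pos_add.1 hc) (sub_pos.2 hd)
  have hbeta {c : ℝ} (hc : -1 < c) : ∫ t in (0 : ℝ)..1, t ^ c * (1 - t) ^ (-d) =
      Real.Gamma (c + 1) * Real.Gamma (1 - d) / Real.Gamma (c + 2 - d) := by
    have h := integral_rpow_mul_one_sub_rpow (neg_lt_iff_pos_add.1 hc) (sub_pos.2 hd)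
    rw [ProbabilityTheory.beta, show c + 1 + (1 - d) = c + 2 - d by ring] at h
    simpa using h
  calc ∫ x in (0 : ℝ)..1, ∫ y in (0 : ℝ)..1, x ^ a * y ^ b * (1 - x * y) ^ (-d)
      = (b - a)⁻¹ * ∫ t in (0 : ℝ)..1, (t ^ a - t ^ b) * (1 - t) ^ (-d) :=
        integral_integral_rpow_mul_rpow_smul_comp_mul (g := fun t : ℝ ↦ (1 - t) ^ (-d)) hab
          (by simpa only [smul_eq_mul, sub_mul] using (hint ha).sub (hint hb))
    _ = (b - a)⁻¹ * (Real.Gamma (a + 1) * Real.Gamma (1 - d) / Real.Gamma (a + 2 - d) -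
          Real.Gamma (b + 1) * Real.Gamma (1 - d) / Real.Gamma (b + 2 - d)) := by
        simp only [sub_mul, intervalIntegral.integral_sub (hint ha) (hint hb), hbeta ha, hbeta hb]
    _ = _ := by ring

theorem double_integral_power_weights (d a b : ℝ) (hd0 : 0 ≤ d) (hd1 : d < 1)
    (ha : -1 < a) (hb : -1 < b) (hab : a ≠ b) :
    (∫ x in (0:ℝ)..1, ∫ y in (0:ℝ)..1, x ^ a * y ^ b * (1 - x * y) ^ (-d))
    = Real.Gamma (1 - d) / (b - a) *
        (Real.Gamma (a + 1) / Real.Gamma (a + 2 - d)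
          - Real.Gamma (b + 1) / Real.Gamma (b + 2 - d)) :=
  double_integral_power_weights_general d a b hd1 ha hb hab
end
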